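/- Let A be a finite-valued Young function satisfying the Δ₂ condition (there is C > 0 with A(2t) ≤ C·A(t) for all t > 0) and the ∇₂ condition (there is c > 0 with A(t) ≤ (1/(2c))·A(ct) for all t > 0). Then for every measurable f : ℝ → ℝ with ∫_ℝ A(c|f|) < ∞ for some c > 0, one has lim_{n→∞} ∫_ℝ A(|χ_n · S_n(f·χ_n) − f|) = 0. -/

import Mathlib

open MeasureTheory Filter Set

/-- The `k`-th Hermite function
`h_k(x) = (-1)^k π^{-1/4} 2^{-k/2} (k!)^{-1/2} e^{x²/2} (d^k/dx^k)(e^{-x²})`. -/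
noncomputable def hermiteFun (k : ℕ) (x : ℝ) : ℝ :=
  (-1 : ℝ) ^ k *
    (Real.pi ^ (-(1 : ℝ) / 4) * (2 : ℝ) ^ (-(k : ℝ) / 2) *
      ((k.factorial : ℝ)) ^ (-(1 : ℝ) / 2)) *
    Real.exp (x ^ 2 / 2) * iteratedDeriv k (fun y : ℝ => Real.exp (-y ^ 2)) x

/-- The `n`-th partial sum of the Hermite series of `f`:
`S_n f = ∑_{k=0}^n (∫ f h_k) h_k`. -/
noncomputable def hermitePartialSum (n : ℕ) (f : ℝ → ℝ) (x : ℝ) : ℝ :=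
  ∑ k ∈ Finset.range (n + 1), (∫ y : ℝ, f y * hermiteFun k y) * hermiteFun k x

/-- A Young function: `[0,∞] `-valued, convex, left-continuous, vanishing at `0` and
not constant on `(0,∞)`.  (The values on negative reals are irrelevant.) -/
structure YoungFunction where
  toFun : ℝ → ENNReal
  zero' : toFun 0 = 0
  convex' : ∀ ⦃x y a b : ℝ⦄, 0 ≤ x → 0 ≤ y → 0 ≤ a → 0 ≤ b → a + b = 1 →
    toFun (a * x + b * y) ≤ ENNReal.ofReal a * toFun x + ENNReal.ofReal b * toFun y
  leftContinuous' : ∀ t : ℝ, 0 < t →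
    Filter.Tendsto toFun (nhdsWithin t (Set.Iio t)) (nhds (toFun t))
  nonconstant' : ∃ s t : ℝ, 0 < s ∧ 0 < t ∧ toFun s ≠ toFun t

/-- The conjugate Young function `Ã(t) = sup_{τ ≥ 0} (τ·t − A(τ))`. -/
noncomputable def YoungFunction.conj (A : YoungFunction) (t : ℝ) : ENNReal :=
  ⨆ τ : {τ : ℝ // 0 ≤ τ}, ENNReal.ofReal (τ.1 * t) - A.toFun τ.1

/-- Even convex functions on the line vanishing at the origin, i.e. finite Young functions
extended evenly to `ℝ`. -/
structure IsEvenYoung (φ : ℝ → ℝ) : Prop where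
  convex : ConvexOn ℝ univ φ
  even : ∀ t, φ (-t) = φ t
  zero : φ 0 = 0

namespace IsEvenYoung

variable {φ : ℝ → ℝ}

theorem nonneg (h : IsEvenYoung φ) (t : ℝ) : 0 ≤ φ t := by
  have := h.convex.2 (mem_univ t) (mem_univ (-t)) (by norm_num : (0 : ℝ) ≤ 1 / 2)
    (by norm_num : (0 : ℝ) ≤ 1 / 2) (by norm_num)
  simp only [smul_eq_mul, h.even] at this
  rw [show 1 / 2 * t + 1 / 2 * -t = 0 by ring, h.zero] at this
  linarith

theorem continuous (h : IsEvenYoung φ) : Continuous φ :=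
  continuousOn_univ.mp (h.convex.continuousOn isOpen_univ)

theorem map_mul_le (h : IsEvenYoung φ) {k : ℝ} (hk : 0 ≤ k) (hk1 : k ≤ 1) (t : ℝ) :
    φ (k * t) ≤ k * φ t := by
  have := h.convex.2 (mem_univ t) (mem_univ 0) hk
    (by linarith : 0 ≤ 1 - k) (by ring)
  simpa [h.zero] using this

theorem map_abs (h : IsEvenYoung φ) (t : ℝ) : φ |t| = φ t := by
  rcases abs_cases t with ⟨h1, _⟩ | ⟨h1, _⟩ <;> rw [h1]
  exact h.even t

theorem mono (h : IsEvenYoung φ) {s t : ℝ} (hst : |s| ≤ |t|) : φ s ≤ φ t := by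
  rw [← h.map_abs s, ← h.map_abs t]
  rcases (abs_nonneg t).eq_or_lt with ht | ht
  · rw [← ht] at hst
    rw [le_antisymm hst (abs_nonneg s), ← ht]
  · have h1 : |s| = |s| / |t| * |t| := by field_simp
    rw [h1]
    refine (h.map_mul_le (by positivity) ((div_le_one ht).2 hst) _).trans ?_
    exact mul_le_of_le_one_left (h.nonneg _) ((div_le_one ht).2 hst)

theorem map_add_le (h : IsEvenYoung φ) (s t : ℝ) :
    φ (s + t) ≤ φ (2 * s) + φ (2 * t) := by
  have := h.convex.2 (mem_univ (2 * s)) (mem_univ (2 * t)) (by norm_num : (0 : ℝ) ≤ 1 / 2)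
    (by norm_num : (0 : ℝ) ≤ 1 / 2) (by norm_num)
  simp only [smul_eq_mul] at this
  rw [show 1 / 2 * (2 * s) + 1 / 2 * (2 * t) = s + t by ring] at this
  linarith [h.nonneg (2 * s), h.nonneg (2 * t)]

/-- Jensen's inequality for probability measures, without integrability assumptions. -/
theorem map_integral_le_lintegral (h : IsEvenYoung φ) {α : Type*} [MeasurableSpace α]
    (μ : Measure α) [IsProbabilityMeasure μ] (f : α → ℝ) (hf : AEStronglyMeasurable f μ) :
    ENNReal.ofReal (φ (∫ x, f x ∂μ)) ≤ ∫⁻ x, ENNReal.ofReal (φ (f x)) ∂μ := by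
  by_cases hfi : Integrable f μ
  · by_cases hg : Integrable (φ ∘ f) μ
    · refine le_of_le_of_eq ?_
        (ofReal_integral_eq_lintegral_ofReal hg (ae_of_all _ fun x => h.nonneg _))
      exact ENNReal.ofReal_le_ofReal (h.convex.map_integral_le h.continuous.continuousOn
        isClosed_univ (by simp) hfi hg)
    · have hm : AEStronglyMeasurable (φ ∘ f) μ := h.continuous.comp_aestronglyMeasurable hf
      have : ∫⁻ x, ENNReal.ofReal (φ (f x)) ∂μ = ⊤ := by
        by_contra hne
        exact hg ⟨hm, (hasFiniteIntegral_iff_ofReal (ae_of_all _ fun x => h.nonneg _)).2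
          (lt_top_iff_ne_top.2 hne)⟩
      simp [this]
  · simp [integral_undef hfi, h.zero]

end IsEvenYoung

/-- The Poisson kernel of the upper half plane at height `η`. -/
noncomputable def poissonDensity (η u : ℝ) : ℝ := Real.pi⁻¹ * (η / (u ^ 2 + η ^ 2))

theorem poissonDensity_nonneg {η : ℝ} (hη : 0 < η) (u : ℝ) : 0 ≤ poissonDensity η u := by
  unfold poissonDensity; positivity

theorem continuous_poissonDensity {η : ℝ} (hη : 0 < η) : Continuous (poissonDensity η) := by
  unfold poissonDensity
  exact continuous_const.mul (continuous_const.div (by fun_prop) fun u => by positivity)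

theorem lintegral_poissonDensity {η : ℝ} (hη : 0 < η) (y : ℝ) :
    ∫⁻ x, ENNReal.ofReal (poissonDensity η (x - y)) = 1 := by
  lift η to NNReal using hη.le
  have := ProbabilityTheory.lintegral_cauchyPDF_eq_one y (γ := η) (by exact_mod_cast hη.ne')
  rw [← this]
  refine lintegral_congr fun x => ?_
  rw [ProbabilityTheory.cauchyPDF_def, ProbabilityTheory.cauchyPDFReal_def]
  congr 1
  simp [poissonDensity, div_eq_mul_inv, mul_assoc]

theorem lintegral_poissonDensity' {η : ℝ} (hη : 0 < η) (x : ℝ) :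
    ∫⁻ y, ENNReal.ofReal (poissonDensity η (x - y)) = 1 := by
  rw [← lintegral_poissonDensity hη x]
  refine lintegral_congr fun y => ?_
  rw [poissonDensity, poissonDensity, ← neg_sub, neg_sq]

theorem IsEvenYoung.lintegral_poisson_le {φ : ℝ → ℝ} (h : IsEvenYoung φ) {η : ℝ} (hη : 0 < η)
    {f : ℝ → ℝ} (hf : Measurable f) :
    ∫⁻ x, ENNReal.ofReal (φ (∫ y, poissonDensity η (x - y) * f y)) ≤
      ∫⁻ x, ENNReal.ofReal (φ (f x)) := by
  have hk := continuous_poissonDensity hη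
  have hm1 : Measurable fun y => ENNReal.ofReal (φ (f y)) :=
    (h.continuous.measurable.comp hf).ennreal_ofReal
  have key : ∀ x, ENNReal.ofReal (φ (∫ y, poissonDensity η (x - y) * f y)) ≤
      ∫⁻ y, ENNReal.ofReal (poissonDensity η (x - y)) * ENNReal.ofReal (φ (f y)) := by
    intro x
    have hmk : Measurable fun y => ENNReal.ofReal (poissonDensity η (x - y)) :=
      (hk.comp (continuous_const.sub continuous_id)).measurable.ennreal_ofReal
    have : IsProbabilityMeasure
        (volume.withDensity fun y => ENNReal.ofReal (poissonDensity η (x - y))) :=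
      ⟨by simpa using lintegral_poissonDensity' hη x⟩
    have := h.map_integral_le_lintegral
      (volume.withDensity fun y => ENNReal.ofReal (poissonDensity η (x - y))) f
      hf.aestronglyMeasurable
    rw [lintegral_withDensity_eq_lintegral_mul _ hmk hm1,
      integral_withDensity_eq_integral_toReal_smul hmk (by simp)] at this
    simpa [ENNReal.toReal_ofReal, poissonDensity_nonneg hη] using this
  refine (lintegral_mono key).trans ?_
  rw [lintegral_lintegral_swap]
  · refine lintegral_mono fun y => ?_
    rw [lintegral_mul_const, lintegral_poissonDensity hη, one_mul]
    exact (hk.comp (continuous_id.sub continuous_const)).measurable.ennreal_ofReal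
  · have h1 : Measurable fun p : ℝ × ℝ => ENNReal.ofReal (poissonDensity η (p.1 - p.2)) :=
      (hk.measurable.comp (measurable_fst.sub measurable_snd)).ennreal_ofReal
    exact (h1.mul (hm1.comp measurable_snd)).aemeasurable

theorem isEvenYoung_rpow {p : ℝ} (hp : 1 ≤ p) : IsEvenYoung fun t => |t| ^ p where
  convex := by
    have h1 : ConvexOn ℝ univ fun t : ℝ => |t| := convexOn_univ_norm
    have hi : Set.image (fun t : ℝ => |t|) univ = Ici 0 := by
      ext x
      exact ⟨fun ⟨y, _, hy⟩ => hy ▸ abs_nonneg y,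
        fun hx => ⟨x, mem_univ _, abs_of_nonneg hx⟩⟩
    refine ConvexOn.comp (g := fun t : ℝ => t ^ p) ?_ h1 ?_
    · rw [hi]; exact convexOn_rpow hp
    · rw [hi]
      exact fun x hx y _ hxy => Real.rpow_le_rpow hx hxy (by linarith)
  even t := by simp
  zero := by simp [Real.zero_rpow (by linarith : p ≠ 0)]

theorem exists_cos_rpow_bound {p : ℝ} (hp : 0 < p)
    (hcos : Real.cos (p * (Real.pi / 2)) ≠ 0) :
    ∃ C K : ℝ, 0 ≤ C ∧ ∀ θ : ℝ, |θ| < Real.pi / 2 →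
      1 ≤ C * Real.cos θ ^ p + K * Real.cos (θ * p) := by
  set K := 2 / Real.cos (p * (Real.pi / 2)) with hK
  have hlim : Tendsto (fun θ => K * Real.cos (θ * p)) (nhds (Real.pi / 2)) (nhds 2) := by
    have : Continuous fun θ => K * Real.cos (θ * p) := by fun_prop
    convert this.tendsto (Real.pi / 2) using 2
    rw [mul_comm (Real.pi / 2), hK, div_mul_cancel₀ _ hcos]
  obtain ⟨δ, hδ, hδ'⟩ := Metric.eventually_nhds_iff.1
    (hlim.eventually (lt_mem_nhds (by norm_num : (1 : ℝ) < 2)))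
  have hpi := Real.pi_pos
  set δ' := min δ (Real.pi / 2) with hδ'def
  have hδ'0 : 0 < δ' := lt_min hδ (by positivity)
  have hs : 0 < Real.sin δ' := Real.sin_pos_of_pos_of_lt_pi hδ'0
    (by have := min_le_right δ (Real.pi / 2); linarith)
  refine ⟨(1 + |K|) / Real.sin δ' ^ p, K, by positivity, fun θ hθ => ?_⟩
  have hcosθ : 0 < Real.cos θ := Real.cos_pos_of_mem_Ioo (abs_lt.1 hθ)
  by_cases hc : Real.pi / 2 - |θ| < δ'
  · have h1 : 1 < K * Real.cos (|θ| * p) := by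
      apply hδ'
      rw [Real.dist_eq, abs_lt]
      constructor <;> linarith [min_le_left δ (Real.pi / 2)]
    have h2 : Real.cos (|θ| * p) = Real.cos (θ * p) := by
      rcases abs_cases θ with ⟨h, _⟩ | ⟨h, _⟩ <;> rw [h]
      rw [neg_mul, Real.cos_neg]
    rw [h2] at h1
    have : 0 ≤ (1 + |K|) / Real.sin δ' ^ p * Real.cos θ ^ p := by positivity
    linarith
  · have h1 : Real.sin δ' ≤ Real.cos θ := by
      rw [← Real.cos_abs θ, ← Real.sin_pi_div_two_sub]
      exact Real.sin_le_sin_of_le_of_le_pi_div_two (by linarith)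
        (by linarith [abs_nonneg θ]) (not_lt.1 hc)
    have h2 : 1 + |K| ≤ (1 + |K|) / Real.sin δ' ^ p * Real.cos θ ^ p := by
      rw [div_mul_eq_mul_div, le_div_iff₀ (by positivity)]
      exact mul_le_mul_of_nonneg_left (Real.rpow_le_rpow hs.le h1 hp.le) (by positivity)
    have h3 : |K * Real.cos (θ * p)| ≤ |K| := by
      rw [abs_mul]
      exact mul_le_of_le_one_right (abs_nonneg K) (Real.abs_cos_le_one _)
    linarith [neg_abs_le (K * Real.cos (θ * p))]

theorem exists_norm_rpow_le_re {p : ℝ} (hp : 0 < p)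
    (hcos : Real.cos (p * (Real.pi / 2)) ≠ 0) :
    ∃ C K : ℝ, 0 ≤ C ∧ ∀ z : ℂ, 0 < z.re →
      ‖z‖ ^ p ≤ C * z.re ^ p + K * (z ^ (p : ℂ)).re := by
  obtain ⟨C, K, hC, h⟩ := exists_cos_rpow_bound hp hcos
  refine ⟨C, K, hC, fun z hz => ?_⟩
  have h1 := h z.arg (Complex.abs_arg_lt_pi_div_two_iff.2 (Or.inl hz))
  have hre : z.re = ‖z‖ * Real.cos z.arg := (Complex.norm_mul_cos_arg z).symm
  have hn : 0 < ‖z‖ := norm_pos_iff.2 fun h0 => by simp [h0] at hz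
  have hc : 0 < Real.cos z.arg := by
    rw [hre] at hz; exact (pos_iff_pos_of_mul_pos hz).1 hn
  rw [Complex.cpow_ofReal_re, hre, Real.mul_rpow hn.le hc.le]
  have := mul_le_mul_of_nonneg_left h1 (Real.rpow_nonneg hn.le p)
  linarith

theorem tendsto_integral_horizontal_line {G : ℂ → ℂ} {η p B R₀ : ℝ} (hη : 0 < η) (hp : 1 < p)
    (hG : DifferentiableOn ℂ G {z | 0 < z.im})
    (hB : ∀ z : ℂ, 0 < z.im → R₀ ≤ ‖z‖ → ‖G z‖ ≤ B * ‖z‖ ^ (-p)) :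
    Tendsto (fun R : ℝ => ∫ x in (-R)..R, G (x + η * Complex.I)) atTop (nhds 0) := by
  have hlim : Tendsto (fun R : ℝ => 4 * |B| * R ^ (-(p - 1))) atTop (nhds 0) := by
    simpa using (tendsto_rpow_neg_atTop (by linarith : 0 < p - 1)).const_mul (4 * |B|)
  refine squeeze_zero_norm' ?_ hlim
  filter_upwards [eventually_ge_atTop R₀, eventually_gt_atTop 0] with R hR hR0
  have hrect := Complex.integral_boundary_rect_eq_zero_of_differentiableOn G
    (⟨-R, η⟩ : ℂ) (⟨R, η + R⟩ : ℂ) (hG.mono fun z hz => ?_)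
  swap
  · have := hz.2
    simp only [mem_preimage] at this
    rw [uIcc_of_le (by linarith)] at this
    exact hη.trans_le this.1
  simp only at hrect
  have hbd : ∀ z : ℂ, 0 < z.im → R ≤ ‖z‖ → ‖G z‖ ≤ |B| * R ^ (-p) := fun z hz hz' => by
    refine (hB z hz (hR.trans hz')).trans ?_
    exact mul_le_mul (le_abs_self B) (Real.rpow_le_rpow_of_nonpos hR0 hz' (by linarith))
      (Real.rpow_nonneg (norm_nonneg _) _) (abs_nonneg _)
  have htop : ‖∫ x in (-R)..R, G (x + (η + R : ℝ) * Complex.I)‖ ≤ |B| * R ^ (-p) * |R - -R| := by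
    refine intervalIntegral.norm_integral_le_of_norm_le_const fun x _ => hbd _ ?_ ?_
    · simp; linarith
    · refine le_trans ?_ (Complex.abs_im_le_norm _)
      simp only [Complex.add_im, Complex.ofReal_im, Complex.mul_im, Complex.ofReal_re,
        Complex.I_im, Complex.I_re]
      rw [le_abs]; left; linarith
  have hside : ∀ s : ℝ, |s| = R →
      ‖∫ y in η..(η + R), G ((s : ℝ) + y * Complex.I)‖ ≤ |B| * R ^ (-p) * |η + R - η| := by
    intro s hs
    refine intervalIntegral.norm_integral_le_of_norm_le_const fun y hy => hbd _ ?_ ?_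
    · rw [uIoc_of_le (by linarith)] at hy
      simp; linarith [hy.1]
    · refine le_trans ?_ (Complex.abs_re_le_norm _)
      simp [hs]
  have h1 := hside R (abs_of_pos hR0)
  have h2 := hside (-R) (by rw [abs_neg, abs_of_pos hR0])
  have heq : ∫ x in (-R)..R, G (x + η * Complex.I) =
      (∫ x in (-R)..R, G (x + (η + R : ℝ) * Complex.I)) -
      Complex.I • (∫ y in η..(η + R), G ((R : ℝ) + y * Complex.I)) +
      Complex.I • (∫ y in η..(η + R), G ((-R : ℝ) + y * Complex.I)) := by
    linear_combination hrect
  rw [heq]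
  refine (norm_add_le _ _).trans ?_
  refine (add_le_add_left (norm_sub_le _ _) _).trans ?_
  rw [norm_smul, norm_smul, Complex.norm_I, one_mul, one_mul]
  rw [show R - -R = 2 * R by ring, abs_of_pos (by positivity : 0 < 2 * R)] at htop
  rw [show η + R - η = R by ring, abs_of_pos hR0] at h1 h2
  have : R ^ (-(p - 1)) = R ^ (-p) * R := by
    rw [show -(p - 1) = -p + 1 by ring, Real.rpow_add_one hR0.ne']
  rw [this]
  linarith

/-- The Poisson extension of `f` at height `η`. -/
noncomputable def poissonExt (η : ℝ) (f : ℝ → ℝ) (x : ℝ) : ℝ :=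
  ∫ y, poissonDensity η (x - y) * f y

/-- The conjugate Poisson extension of `f` at height `η`. -/
noncomputable def conjPoissonExt (η : ℝ) (f : ℝ → ℝ) (x : ℝ) : ℝ :=
  ∫ y, Real.pi⁻¹ * ((x - y) / ((x - y) ^ 2 + η ^ 2)) * f y

/-- The analytic completion of the Poisson extension of `f`. -/
noncomputable def cauchyExt (f : ℝ → ℝ) (z : ℂ) : ℂ :=
  ∫ y, (Real.pi⁻¹ : ℂ) * (Complex.I / (z - y)) * f y

theorem differentiableOn_cauchyExt {f : ℝ → ℝ} (hf : Integrable f) :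
    DifferentiableOn ℂ (cauchyExt f) {z | 0 < z.im} := by
  intro z₀ hz₀
  refine DifferentiableAt.differentiableWithinAt ?_
  have hz₀' : 0 < z₀.im := hz₀
  have him : ∀ z ∈ Metric.ball z₀ (z₀.im / 2), z₀.im / 2 < z.im := fun z hz => by
    have h1 := (Complex.abs_im_le_norm (z - z₀)).trans_lt (mem_ball_iff_norm.1 hz)
    rw [Complex.sub_im, abs_lt] at h1
    linarith [h1.1]
  have hnorm : ∀ (z : ℂ) (y : ℝ), |z.im| ≤ ‖z - y‖ := fun z y => by
    simpa using Complex.abs_im_le_norm (z - y)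
  have hmeas : ∀ z : ℂ, AEStronglyMeasurable
      (fun y : ℝ => (Real.pi⁻¹ : ℂ) * (Complex.I / (z - y)) * f y) := fun z => by
    have h1 : Measurable fun y : ℝ => (Real.pi⁻¹ : ℂ) * (Complex.I / (z - y)) := by fun_prop
    exact h1.aestronglyMeasurable.mul
      (Complex.continuous_ofReal.comp_aestronglyMeasurable hf.aestronglyMeasurable)
  have key := hasDerivAt_integral_of_dominated_loc_of_deriv_le
    (μ := volume) (F := fun (z : ℂ) (y : ℝ) => (Real.pi⁻¹ : ℂ) * (Complex.I / (z - y)) * f y)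
    (F' := fun (z : ℂ) (y : ℝ) => (Real.pi⁻¹ : ℂ) * (-Complex.I / (z - y) ^ 2) * f y)
    (x₀ := z₀) (s := Metric.ball z₀ (z₀.im / 2))
    (bound := fun y => Real.pi⁻¹ * (1 / (z₀.im / 2) ^ 2) * |f y|)
    (Metric.ball_mem_nhds _ (by linarith)) (Eventually.of_forall hmeas) ?_ ?_ ?_ ?_ ?_
  · exact key.2.differentiableAt
  · refine (hf.norm.const_mul (Real.pi⁻¹ * (1 / z₀.im))).mono' (hmeas z₀) (ae_of_all _ fun y => ?_)
    simp only [norm_mul, norm_div, Complex.norm_I, Complex.norm_real, norm_inv]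
    rw [Real.norm_of_nonneg Real.pi_pos.le]
    gcongr
    exact (le_abs_self _).trans (hnorm z₀ y)
  · have h1 : Measurable fun y : ℝ => (Real.pi⁻¹ : ℂ) * (-Complex.I / (z₀ - y) ^ 2) := by fun_prop
    exact h1.aestronglyMeasurable.mul
      (Complex.continuous_ofReal.comp_aestronglyMeasurable hf.aestronglyMeasurable)
  · refine ae_of_all _ fun y z hz => ?_
    simp only [norm_mul, norm_div, Complex.norm_I, Complex.norm_real, norm_inv, norm_neg, norm_pow]
    rw [Real.norm_of_nonneg Real.pi_pos.le, Real.norm_eq_abs]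
    gcongr
    exact ((him z hz).le.trans (le_abs_self _)).trans (hnorm z y)
  · exact hf.abs.const_mul _
  · refine ae_of_all _ fun y z hz => ?_
    have hne : z - y ≠ 0 := fun h0 => by
      have := hnorm z y
      rw [h0, norm_zero] at this
      have h2 := abs_nonpos_iff.1 this
      linarith [him z hz]
    have h1 : HasDerivAt (fun z : ℂ => z - y) 1 z := (hasDerivAt_id z).sub_const _
    have h2 := ((h1.inv hne).const_mul Complex.I).const_mul (Real.pi⁻¹ : ℂ) |>.mul_const (f y : ℂ)
    convert! h2 using 1
    simp only [div_eq_mul_inv]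
    ring

theorem integrable_cauchyExt {f : ℝ → ℝ} (hf : Integrable f) {z : ℂ} (hz : 0 < z.im) :
    Integrable fun y : ℝ => (Real.pi⁻¹ : ℂ) * (Complex.I / (z - y)) * f y := by
  have h1 : Measurable fun y : ℝ => (Real.pi⁻¹ : ℂ) * (Complex.I / (z - y)) := by fun_prop
  refine (hf.norm.const_mul (Real.pi⁻¹ * (1 / z.im))).mono' (h1.aestronglyMeasurable.mul
      (Complex.continuous_ofReal.comp_aestronglyMeasurable hf.aestronglyMeasurable))
      (ae_of_all _ fun y => ?_)
  simp only [norm_mul, norm_div, Complex.norm_I, Complex.norm_real, norm_inv]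
  rw [Real.norm_of_nonneg Real.pi_pos.le]
  gcongr
  exact (le_abs_self _).trans (by simpa using Complex.abs_im_le_norm (z - y))

theorem cauchyKernel_re (x η y : ℝ) (t : ℝ) :
    ((Real.pi⁻¹ : ℂ) * (Complex.I / ((x : ℂ) + η * Complex.I - y)) * t).re =
      poissonDensity η (x - y) * t := by
  have : (Real.pi⁻¹ : ℂ) = ((Real.pi⁻¹ : ℝ) : ℂ) := by push_cast; rfl
  rw [this]
  simp [poissonDensity, Complex.div_re, Complex.normSq_apply]
  left; congr 1; ring

theorem cauchyKernel_im (x η y : ℝ) (t : ℝ) :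
    ((Real.pi⁻¹ : ℂ) * (Complex.I / ((x : ℂ) + η * Complex.I - y)) * t).im =
      Real.pi⁻¹ * ((x - y) / ((x - y) ^ 2 + η ^ 2)) * t := by
  have : (Real.pi⁻¹ : ℂ) = ((Real.pi⁻¹ : ℝ) : ℂ) := by push_cast; rfl
  rw [this]
  simp [Complex.div_im, Complex.normSq_apply]
  left; congr 1; ring

theorem cauchyExt_re {f : ℝ → ℝ} (hf : Integrable f) {η : ℝ} (hη : 0 < η) (x : ℝ) :
    (cauchyExt f (x + η * Complex.I)).re = poissonExt η f x := by
  have h := integrable_cauchyExt hf (z := x + η * Complex.I) (by simpa using hη)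
  have := integral_re h
  simp only [RCLike.re_to_complex, cauchyKernel_re] at this
  exact this.symm

theorem cauchyExt_im {f : ℝ → ℝ} (hf : Integrable f) {η : ℝ} (hη : 0 < η) (x : ℝ) :
    (cauchyExt f (x + η * Complex.I)).im = conjPoissonExt η f x := by
  have h := integrable_cauchyExt hf (z := x + η * Complex.I) (by simpa using hη)
  have := integral_im h
  simp only [RCLike.im_to_complex, cauchyKernel_im] at this
  exact this.symm

theorem norm_cauchyExt_le {f : ℝ → ℝ} (hf : Integrable f) {M : ℝ}
    (hM : ∀ y, M < |y| → f y = 0) {z : ℂ} (hz : 0 < ‖z‖) (hzM : 2 * M ≤ ‖z‖) :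
    ‖cauchyExt f z‖ ≤ 2 * (∫ y, |f y|) * ‖z‖⁻¹ := by
  have : ‖cauchyExt f z‖ ≤ ∫ y, 2 * ‖z‖⁻¹ * |f y| := by
    refine norm_integral_le_of_norm_le (hf.abs.const_mul _) (ae_of_all _ fun y => ?_)
    by_cases hy : M < |y|
    · simp [hM y hy]
    have h1 : ‖z‖ / 2 ≤ ‖z - y‖ := by
      have := norm_sub_norm_le z (y : ℂ)
      rw [Complex.norm_real, Real.norm_eq_abs] at this
      linarith [not_lt.1 hy]
    simp only [norm_mul, norm_div, Complex.norm_I, Complex.norm_real, norm_inv]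
    rw [Real.norm_of_nonneg Real.pi_pos.le, Real.norm_eq_abs]
    refine mul_le_mul_of_nonneg_right ?_ (abs_nonneg _)
    have h2 : Real.pi⁻¹ ≤ 1 := inv_le_one_of_one_le₀ (by linarith [Real.pi_gt_three])
    have h3 : 1 / ‖z - y‖ ≤ 1 / (‖z‖ / 2) := one_div_le_one_div_of_le (by positivity) h1
    calc Real.pi⁻¹ * (1 / ‖z - y‖) ≤ 1 * (1 / (‖z‖ / 2)) :=
          mul_le_mul h2 h3 (by positivity) zero_le_one
      _ = 2 * ‖z‖⁻¹ := by field_simp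
  rw [integral_const_mul] at this
  linarith

theorem cauchyExt_re_pos {f : ℝ → ℝ} (hf : Integrable f) (hf0 : ∀ y, 0 ≤ f y)
    (hpos : 0 < ∫ y, f y) {z : ℂ} (hz : 0 < z.im) : 0 < (cauchyExt f z).re := by
  have hz' : z = (z.re : ℂ) + z.im * Complex.I := (Complex.re_add_im z).symm
  rw [hz', cauchyExt_re hf hz, poissonExt]
  have hfint : Integrable fun y => poissonDensity z.im (z.re - y) * f y := by
    have := (integrable_cauchyExt hf hz).re
    rw [hz'] at this
    simpa only [RCLike.re_to_complex, cauchyKernel_re] using this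
  have hk : ∀ y, 0 < poissonDensity z.im (z.re - y) := fun y => by
    unfold poissonDensity; have := Real.pi_pos; positivity
  rw [integral_pos_iff_support_of_nonneg hf0 hf] at hpos
  rw [integral_pos_iff_support_of_nonneg (fun y => mul_nonneg (hk y).le (hf0 y)) hfint]
  convert hpos using 2
  ext y
  simp [(hk y).ne']

/-- M. Riesz's inequality for the conjugate Poisson extension of nonnegative functions. -/
theorem exists_riesz_bound {p : ℝ} (hp : 1 < p) (hcos : Real.cos (p * (Real.pi / 2)) ≠ 0) :
    ∃ C : ℝ, 0 ≤ C ∧ ∀ (η M : ℝ) (f : ℝ → ℝ), 0 < η → Measurable f → Integrable f →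
      (∀ y, 0 ≤ f y) → (∀ y, M < |y| → f y = 0) →
      ∫⁻ x, ENNReal.ofReal (|conjPoissonExt η f x| ^ p) ≤
        ENNReal.ofReal C * ∫⁻ x, ENNReal.ofReal (|f x| ^ p) := by
  have hp0 : 0 < p := by linarith
  obtain ⟨C, K, hC, hCK⟩ := exists_norm_rpow_le_re hp0 hcos
  refine ⟨C, hC, fun η M f hη hmeas hf hf0 hM => ?_⟩
  rcases (integral_nonneg (μ := volume) (f := f) fun y => hf0 y).eq_or_lt with h0 | hpos
  · have hfz : f =ᵐ[volume] 0 := (integral_eq_zero_iff_of_nonneg hf0 hf).1 h0.symm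
    have : ∀ x, conjPoissonExt η f x = 0 := fun x => by
      rw [conjPoissonExt]
      refine integral_eq_zero_of_ae ?_
      filter_upwards [hfz] with y hy
      simp [hy]
    simp [this, Real.zero_rpow hp0.ne']
  set F := cauchyExt f with hF
  set G : ℂ → ℂ := fun z => F z ^ (p : ℂ) with hG
  have hFpos : ∀ z : ℂ, 0 < z.im → 0 < (F z).re := fun z hz => cauchyExt_re_pos hf hf0 hpos hz
  have hFd := differentiableOn_cauchyExt hf
  have hGd : DifferentiableOn ℂ G {z | 0 < z.im} :=
    hFd.cpow_const fun z hz => Or.inl (hFpos z hz)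
  have hline : Continuous fun x : ℝ => ((x : ℂ) + η * Complex.I) := by fun_prop
  have hline' : ∀ x : ℝ, ((x : ℂ) + η * Complex.I) ∈ {z : ℂ | 0 < z.im} := fun x => by simpa
  have hFc : Continuous fun x : ℝ => F (x + η * Complex.I) :=
    hFd.continuousOn.comp_continuous hline hline'
  have hGc : Continuous fun x : ℝ => G (x + η * Complex.I) :=
    hGd.continuousOn.comp_continuous hline hline'
  have hlim := tendsto_integral_horizontal_line (G := G) (R₀ := max 1 (2 * M))
    (B := (2 * ∫ y, |f y|) ^ p) hη hp hGd (fun z _ hR => by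
      have hz1 : 0 < ‖z‖ := zero_lt_one.trans_le ((le_max_left _ _).trans hR)
      have := norm_cauchyExt_le hf hM hz1 ((le_max_right _ _).trans hR)
      rw [hG]
      simp only [Complex.norm_cpow_real]
      rw [Real.rpow_neg hz1.le, ← Real.inv_rpow hz1.le, ← Real.mul_rpow (by positivity)
        (by positivity)]
      exact Real.rpow_le_rpow (norm_nonneg _) this hp0.le)
  have hP : ∀ x : ℝ, (F (x + η * Complex.I)).re = poissonExt η f x := cauchyExt_re hf hη
  have hQ : ∀ x : ℝ, (F (x + η * Complex.I)).im = conjPoissonExt η f x := cauchyExt_im hf hη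
  have hPc : Continuous (poissonExt η f) := by
    simpa only [Function.comp_def, hP] using Complex.continuous_re.comp hFc
  have hP0 : ∀ x, 0 < poissonExt η f x := fun x => hP x ▸ hFpos _ (hline' x)
  have hbound : ∀ R : ℝ, 0 < R →
      ∫⁻ x in Ioc (-R) R, ENNReal.ofReal (|conjPoissonExt η f x| ^ p) ≤
      ENNReal.ofReal C * (∫⁻ x, ENNReal.ofReal (|poissonExt η f x| ^ p)) +
      ENNReal.ofReal (K * (∫ x in (-R)..R, G (x + η * Complex.I)).re) := by
    intro R hR
    have hPi : IntervalIntegrable (fun x => C * poissonExt η f x ^ p) volume (-R) R :=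
      (continuous_const.mul (hPc.rpow_const fun x => Or.inr hp0.le)).intervalIntegrable _ _
    have hGi : IntervalIntegrable (fun x : ℝ => K * (G (x + η * Complex.I)).re) volume (-R) R :=
      (continuous_const.mul (Complex.continuous_re.comp hGc)).intervalIntegrable _ _
    have hpt : ∀ x : ℝ, |conjPoissonExt η f x| ^ p ≤
        C * poissonExt η f x ^ p + K * (G (x + η * Complex.I)).re := fun x => by
      have := hCK _ (hFpos _ (hline' x))
      rw [hP] at this
      refine le_trans (Real.rpow_le_rpow (abs_nonneg _) ?_ hp0.le) this
      rw [← hQ]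
      exact Complex.abs_im_le_norm _
    have hre : (∫ x in (-R)..R, G (x + η * Complex.I)).re =
        ∫ x in (-R)..R, (G (x + η * Complex.I)).re := by
      have := intervalIntegral.intervalIntegral_re (hGc.intervalIntegrable (μ := volume) (-R) R)
      simpa using this.symm
    calc ∫⁻ x in Ioc (-R) R, ENNReal.ofReal (|conjPoissonExt η f x| ^ p)
        ≤ ∫⁻ x in Ioc (-R) R, ENNReal.ofReal (C * poissonExt η f x ^ p +
            K * (G (x + η * Complex.I)).re) :=
          lintegral_mono fun x => ENNReal.ofReal_le_ofReal (hpt x)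
      _ = ENNReal.ofReal (∫ x in (-R)..R, (C * poissonExt η f x ^ p +
            K * (G (x + η * Complex.I)).re)) := by
          rw [intervalIntegral.integral_of_le (by linarith),
            ofReal_integral_eq_lintegral_ofReal (hPi.add hGi).1
              (ae_of_all _ fun x => (Real.rpow_nonneg (abs_nonneg _) _).trans (hpt x))]
      _ ≤ ENNReal.ofReal (∫ x in (-R)..R, C * poissonExt η f x ^ p) +
            ENNReal.ofReal (K * (∫ x in (-R)..R, G (x + η * Complex.I)).re) := by
          rw [intervalIntegral.integral_add hPi hGi, intervalIntegral.integral_const_mul K, hre]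
          exact ENNReal.ofReal_add_le
      _ ≤ _ := by
          gcongr
          rw [intervalIntegral.integral_of_le (by linarith),
            ofReal_integral_eq_lintegral_ofReal hPi.1
              (ae_of_all _ fun x => mul_nonneg hC (Real.rpow_nonneg (hP0 x).le _))]
          simp only [ENNReal.ofReal_mul hC]
          rw [lintegral_const_mul' _ _ ENNReal.ofReal_ne_top]
          refine mul_le_mul_right ?_ _
          refine (setLIntegral_le_lintegral _ _).trans (lintegral_mono fun x => ?_)
          rw [abs_of_pos (hP0 x)]
  have hcover : AECover volume atTop fun R : ℝ => Ioc (-R) R :=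
    aecover_Ioc tendsto_neg_atTop_atBot tendsto_id
  have hQm : Measurable fun x => ENNReal.ofReal (|conjPoissonExt η f x| ^ p) := by
    have : Continuous (conjPoissonExt η f) := by
      simpa only [Function.comp_def, hQ] using Complex.continuous_im.comp hFc
    exact (this.abs.rpow_const fun x => Or.inr hp0.le).measurable.ennreal_ofReal
  have hl := hcover.lintegral_tendsto_of_countably_generated hQm.aemeasurable
  have hr : Tendsto (fun R : ℝ => ENNReal.ofReal C * (∫⁻ x, ENNReal.ofReal (|poissonExt η f x| ^ p))
      + ENNReal.ofReal (K * (∫ x in (-R)..R, G (x + η * Complex.I)).re)) atTop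
      (nhds (ENNReal.ofReal C * (∫⁻ x, ENNReal.ofReal (|poissonExt η f x| ^ p)) + 0)) := by
    refine tendsto_const_nhds.add ?_
    have := ENNReal.tendsto_ofReal (((Complex.continuous_re.tendsto _).comp hlim).const_mul K)
    simpa using this
  have hle := le_of_tendsto_of_tendsto hl hr
    ((eventually_gt_atTop 0).mono fun R hR => hbound R hR)
  rw [add_zero] at hle
  refine hle.trans ?_
  gcongr ENNReal.ofReal C * ?_
  exact (isEvenYoung_rpow hp.le).lintegral_poisson_le hη hmeas

namespace IsEvenYoung

variable {φ : ℝ → ℝ}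

theorem exists_upper_growth (h : IsEvenYoung φ) {D : ℝ} (hD : 1 ≤ D)
    (hΔ : ∀ t, φ (2 * t) ≤ D * φ t) :
    ∃ q : ℝ, ∀ r t : ℝ, 1 ≤ r → φ (r * t) ≤ D * r ^ q * φ t := by
  have hD0 : 0 < D := by linarith
  refine ⟨Real.logb 2 D, fun r t hr => ?_⟩
  have hpow : ∀ (k : ℕ) t, φ (2 ^ k * t) ≤ D ^ k * φ t := fun k => by
    induction k with
    | zero => simp
    | succ k ih =>
      intro t
      calc φ (2 ^ (k + 1) * t) = φ (2 * (2 ^ k * t)) := by ring_nf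
        _ ≤ D * (D ^ k * φ t) := (hΔ _).trans (mul_le_mul_of_nonneg_left (ih t) hD0.le)
        _ = D ^ (k + 1) * φ t := by ring
  obtain ⟨k, hk1, hk2⟩ := exists_nat_pow_near hr (by norm_num : (1 : ℝ) < 2)
  have hDk : D ^ k ≤ r ^ Real.logb 2 D := by
    calc D ^ k = ((2 : ℝ) ^ Real.logb 2 D) ^ k := by
          rw [Real.rpow_logb (by norm_num) (by norm_num) hD0]
      _ = ((2 : ℝ) ^ k) ^ Real.logb 2 D := by
          rw [← Real.rpow_natCast, ← Real.rpow_natCast, ← Real.rpow_mul (by norm_num),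
            ← Real.rpow_mul (by norm_num), mul_comm]
      _ ≤ _ := Real.rpow_le_rpow (by positivity) hk1 (Real.logb_nonneg (by norm_num) hD)
  calc φ (r * t) ≤ φ (2 ^ (k + 1) * t) := h.mono (by
        rw [abs_mul, abs_mul, abs_of_pos (by linarith : 0 < r),
          abs_of_pos (by positivity : (0 : ℝ) < 2 ^ (k + 1))]
        exact mul_le_mul_of_nonneg_right hk2.le (abs_nonneg t))
    _ ≤ D ^ (k + 1) * φ t := hpow _ _
    _ = D * D ^ k * φ t := by ring
    _ ≤ D * r ^ Real.logb 2 D * φ t := by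
        have := h.nonneg t
        gcongr

theorem exists_lower_growth (h : IsEvenYoung φ) {c : ℝ} (hc : 1 < c)
    (hn : ∀ t, 2 * c * φ t ≤ φ (c * t)) :
    ∃ p : ℝ, 1 < p ∧ ∀ r t : ℝ, 1 ≤ r → r ^ p * φ t ≤ 2 * c * φ (r * t) := by
  have hc0 : 0 < c := by linarith
  have hp : 1 < Real.logb c (2 * c) := by
    rw [Real.lt_logb_iff_rpow_lt hc (by positivity), Real.rpow_one]; linarith
  refine ⟨Real.logb c (2 * c), hp, fun r t hr => ?_⟩
  have hpow : ∀ (k : ℕ) t, (2 * c) ^ k * φ t ≤ φ (c ^ k * t) := fun k => by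
    induction k with
    | zero => simp
    | succ k ih =>
      intro t
      calc (2 * c) ^ (k + 1) * φ t = (2 * c) * ((2 * c) ^ k * φ t) := by ring
        _ ≤ (2 * c) * φ (c ^ k * t) := mul_le_mul_of_nonneg_left (ih t) (by positivity)
        _ ≤ φ (c * (c ^ k * t)) := hn _
        _ = φ (c ^ (k + 1) * t) := by ring_nf
  obtain ⟨k, hk1, hk2⟩ := exists_nat_pow_near hr hc
  have hck : r ^ Real.logb c (2 * c) ≤ (2 * c) ^ (k + 1) := by
    calc r ^ Real.logb c (2 * c) ≤ (c ^ (k + 1)) ^ Real.logb c (2 * c) :=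
          Real.rpow_le_rpow (by linarith) hk2.le (by linarith)
      _ = (c ^ Real.logb c (2 * c)) ^ (k + 1) := by
          rw [← Real.rpow_natCast, ← Real.rpow_natCast, ← Real.rpow_mul hc0.le,
            ← Real.rpow_mul hc0.le, mul_comm]
      _ = _ := by rw [Real.rpow_logb hc0 hc.ne' (by positivity)]
  calc r ^ Real.logb c (2 * c) * φ t ≤ (2 * c) ^ (k + 1) * φ t :=
        mul_le_mul_of_nonneg_right hck (h.nonneg t)
    _ = 2 * c * ((2 * c) ^ k * φ t) := by ring
    _ ≤ 2 * c * φ (c ^ k * t) := mul_le_mul_of_nonneg_left (hpow k t) (by positivity)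
    _ ≤ 2 * c * φ (r * t) := by
        refine mul_le_mul_of_nonneg_left (h.mono ?_) (by positivity)
        rw [abs_mul, abs_mul, abs_of_pos (by linarith : 0 < r), abs_of_pos (by positivity)]
        exact mul_le_mul_of_nonneg_right hk1 (abs_nonneg t)

end IsEvenYoung

/-- The gauge comparing `t` with the level `s`: a `p`-th power above the level and a `q`-th power
below it. -/
noncomputable def levelGauge (p q s t : ℝ) : ℝ :=
  if s < |t| then (|t| / s) ^ p else (|t| / s) ^ q

theorem measurable_levelGauge (p q s : ℝ) : Measurable (levelGauge p q s) := by
  unfold levelGauge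
  refine Measurable.ite (measurableSet_lt measurable_const (by fun_prop)) ?_ ?_ <;> fun_prop

theorem exists_tsum_levelGauge_le {φ : ℝ → ℝ} (h : IsEvenYoung φ) {p q p₁ q₁ C : ℝ} (hC : 0 ≤ C)
    (hp : p < p₁) (hq : q₁ < q) (hq0 : 0 < q)
    (hlow : ∀ r t : ℝ, 1 ≤ r → r ^ p₁ * φ t ≤ C * φ (r * t))
    (hup : ∀ r t : ℝ, 1 ≤ r → φ (r * t) ≤ C * r ^ q₁ * φ t) :
    ∃ S : ℝ, 0 ≤ S ∧ ∀ t : ℝ, ∑' j : ℤ, ENNReal.ofReal (φ (2 ^ j) * levelGauge p q (2 ^ j) t) ≤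
      ENNReal.ofReal S * ENNReal.ofReal (φ t) := by
  obtain ⟨δ, hδ0, hδp, hδq⟩ : ∃ δ : ℝ, 0 < δ ∧ δ ≤ p₁ - p ∧ δ ≤ q - q₁ :=
    ⟨min (p₁ - p) (q - q₁), lt_min (by linarith) (by linarith), min_le_left _ _, min_le_right _ _⟩
  set ρ : ℝ := 2 ^ (-δ) with hρ
  have hρ0 : 0 < ρ := by positivity
  have hρ1 : ρ < 1 := Real.rpow_lt_one_of_one_lt_of_neg (by norm_num) (by linarith)
  have hgeo := summable_geometric_of_lt_one hρ0.le hρ1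
  have hsum : Summable fun m : ℤ => ρ ^ m.natAbs :=
    Summable.of_nat_of_neg (by simpa using hgeo) (by simpa using hgeo)
  have hρz : ∀ m : ℕ, ((2 : ℝ) ^ m) ^ (-δ) = ρ ^ m := fun m => by
    rw [hρ, ← Real.rpow_natCast, ← Real.rpow_natCast, ← Real.rpow_mul (by norm_num),
      ← Real.rpow_mul (by norm_num), mul_comm]
  refine ⟨C * ρ⁻¹ * ∑' m : ℤ, ρ ^ m.natAbs, mul_nonneg (by positivity)
    (tsum_nonneg fun _ => by positivity), fun t => ?_⟩
  rcases eq_or_ne t 0 with rfl | ht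
  · have : ∀ j : ℤ, levelGauge p q (2 ^ j) 0 = 0 := fun j => by
      have : ¬ ((2 : ℝ) ^ j < 0) := not_lt.2 (by positivity)
      simp [levelGauge, this, Real.zero_rpow hq0.ne']
    simp [this]
  have ht' : 0 < |t| := abs_pos.2 ht
  obtain ⟨j₀, hj1, hj2⟩ := exists_mem_Ico_zpow (y := (2 : ℝ)) ht' (by norm_num)
  have key : ∀ j : ℤ, φ (2 ^ j) * levelGauge p q (2 ^ j) t ≤
      C * ρ⁻¹ * φ t * ρ ^ (j - j₀).natAbs := by
    intro j
    have h2j : (0 : ℝ) < 2 ^ j := by positivity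
    have hφt := h.nonneg t
    rw [levelGauge]
    split_ifs with hlt
    · have hjj : j ≤ j₀ := by
        have := (zpow_lt_zpow_iff_right₀ (by norm_num : (1 : ℝ) < 2)).1 (hlt.trans hj2)
        omega
      obtain ⟨m, hm⟩ := Int.le.dest hjj
      have hnat : (j - j₀).natAbs = m := by omega
      set r := |t| / 2 ^ j with hr
      have hr1 : 1 ≤ r := (one_le_div h2j).2 hlt.le
      have hr0 : 0 < r := by linarith
      have hrm : (2 : ℝ) ^ m ≤ r := by
        rw [hr, le_div_iff₀ h2j, ← zpow_natCast, ← zpow_add₀ (by norm_num)]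
        rwa [add_comm, hm]
      have h1 := hlow r (2 ^ j) hr1
      rw [show r * 2 ^ j = |t| by rw [hr]; field_simp, h.map_abs] at h1
      calc φ (2 ^ j) * r ^ p = r ^ p₁ * φ (2 ^ j) * r ^ (p - p₁) := by
            rw [Real.rpow_sub hr0]; field_simp
        _ ≤ C * φ t * r ^ (p - p₁) := by gcongr
        _ ≤ C * φ t * r ^ (-δ) := by
            have := Real.rpow_le_rpow_of_exponent_le hr1 (by linarith : p - p₁ ≤ -δ)
            gcongr
        _ ≤ C * φ t * ((2 : ℝ) ^ m) ^ (-δ) := by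
            have := Real.rpow_le_rpow_of_nonpos (by positivity) hrm (by linarith : -δ ≤ 0)
            gcongr
        _ = C * 1 * φ t * ρ ^ m := by rw [hρz]; ring
        _ ≤ C * ρ⁻¹ * φ t * ρ ^ (j - j₀).natAbs := by
            rw [hnat]
            have := (one_le_inv₀ hρ0).2 hρ1.le
            gcongr
    · have hle := not_lt.1 hlt
      have hjj : j₀ ≤ j := (zpow_le_zpow_iff_right₀ (by norm_num : (1 : ℝ) < 2)).1 (hj1.trans hle)
      obtain ⟨m, hm⟩ := Int.le.dest hjj
      have hnat : (j - j₀).natAbs = m := by omega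
      set r := 2 ^ j / |t| with hr
      have hr1 : 1 ≤ r := (one_le_div ht').2 hle
      have hr0 : 0 < r := by linarith
      have hrm : (2 : ℝ) ^ m ≤ 2 * r := by
        have : (2 : ℝ) ^ m * |t| ≤ 2 * 2 ^ j := by
          calc (2 : ℝ) ^ m * |t| ≤ 2 ^ m * 2 ^ (j₀ + 1) := by gcongr
            _ = 2 * 2 ^ j := by
              rw [← hm, zpow_add₀ (by norm_num), zpow_add₀ (by norm_num), zpow_natCast]; ring
        rw [hr, ← mul_div_assoc, le_div_iff₀ ht']
        exact this
      have h1 := hup r |t| hr1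
      rw [show r * |t| = 2 ^ j by rw [hr]; field_simp, h.map_abs] at h1
      have hinv : |t| / 2 ^ j = r⁻¹ := by rw [hr, inv_div]
      calc φ (2 ^ j) * (|t| / 2 ^ j) ^ q ≤ C * r ^ q₁ * φ t * (|t| / 2 ^ j) ^ q := by gcongr
        _ = C * φ t * r ^ (q₁ - q) := by
            rw [hinv, Real.inv_rpow hr0.le, Real.rpow_sub hr0]; field_simp
        _ ≤ C * φ t * r ^ (-δ) := by
            have := Real.rpow_le_rpow_of_exponent_le hr1 (by linarith : q₁ - q ≤ -δ)
            gcongr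
        _ = C * ρ⁻¹ * φ t * (2 * r) ^ (-δ) := by
            rw [Real.mul_rpow (by norm_num) hr0.le, ← hρ]; field_simp
        _ ≤ C * ρ⁻¹ * φ t * ((2 : ℝ) ^ m) ^ (-δ) := by
            have := Real.rpow_le_rpow_of_nonpos (by positivity) hrm (by linarith : -δ ≤ 0)
            gcongr
        _ = C * ρ⁻¹ * φ t * ρ ^ (j - j₀).natAbs := by rw [hρz, hnat]
  calc ∑' j : ℤ, ENNReal.ofReal (φ (2 ^ j) * levelGauge p q (2 ^ j) t)
      ≤ ∑' j : ℤ, ENNReal.ofReal (C * ρ⁻¹ * φ t * ρ ^ (j - j₀).natAbs) :=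
        ENNReal.tsum_le_tsum fun j => ENNReal.ofReal_le_ofReal (key j)
    _ = ENNReal.ofReal (C * ρ⁻¹ * φ t) * ∑' j : ℤ, ENNReal.ofReal (ρ ^ (j - j₀).natAbs) := by
        rw [← ENNReal.tsum_mul_left]
        refine tsum_congr fun j => ?_
        rw [ENNReal.ofReal_mul (by have := h.nonneg t; positivity)]
    _ = ENNReal.ofReal (C * ρ⁻¹ * φ t) * ENNReal.ofReal (∑' m : ℤ, ρ ^ m.natAbs) := by
        have := (Equiv.subRight j₀).tsum_eq fun m : ℤ => ENNReal.ofReal (ρ ^ m.natAbs)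
        simp only [Equiv.subRight_apply] at this
        rw [this, ENNReal.ofReal_tsum_of_nonneg (fun _ => by positivity) hsum]
    _ = _ := by
        rw [← ENNReal.ofReal_mul (by have := h.nonneg t; positivity),
          ← ENNReal.ofReal_mul (mul_nonneg (by positivity) (tsum_nonneg fun _ => by positivity))]
        congr 1; ring

/-- A Marcinkiewicz-type interpolation theorem for modulars. -/
theorem exists_lintegral_le_of_distribution_le {φ : ℝ → ℝ} (h : IsEvenYoung φ)
    {p q p₁ q₁ C K : ℝ} (hC : 0 ≤ C) (hK : 0 ≤ K)
    (hp : p < p₁) (hq : q₁ < q) (hq0 : 0 < q)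
    (hlow : ∀ r t : ℝ, 1 ≤ r → r ^ p₁ * φ t ≤ C * φ (r * t))
    (hup : ∀ r t : ℝ, 1 ≤ r → φ (r * t) ≤ C * r ^ q₁ * φ t) :
    ∃ B : ℝ, 0 ≤ B ∧ ∀ f g : ℝ → ℝ, Measurable f → Measurable g →
      (∀ s : ℝ, 0 < s → volume {x | 2 * s < |g x|} ≤
        ENNReal.ofReal K * ∫⁻ x, ENNReal.ofReal (levelGauge p q s (f x))) →
      ∫⁻ x, ENNReal.ofReal (φ (g x)) ≤ ENNReal.ofReal B * ∫⁻ x, ENNReal.ofReal (φ (f x)) := by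
  obtain ⟨S, hS, hsum⟩ := exists_tsum_levelGauge_le h hC hp hq hq0 hlow hup
  have hD0 : 0 ≤ C * (4 : ℝ) ^ q₁ := by positivity
  refine ⟨C * (4 : ℝ) ^ q₁ * K * S, by positivity, fun f g hf hg hfg => ?_⟩
  have hset : ∀ j : ℤ, MeasurableSet {x | 2 * (2 : ℝ) ^ j < |g x|} := fun j =>
    measurableSet_lt measurable_const (by fun_prop)
  have hpt : ∀ x, ENNReal.ofReal (φ (g x)) ≤ ∑' j : ℤ,
      {x | 2 * (2 : ℝ) ^ j < |g x|}.indicator (fun _ => ENNReal.ofReal (φ (4 * 2 ^ j))) x := by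
    intro x
    rcases eq_or_ne (g x) 0 with h0 | h0
    · simp [h0, h.zero]
    obtain ⟨i, hi1, hi2⟩ := exists_mem_Ioc_zpow (y := (2 : ℝ)) (abs_pos.2 h0) (by norm_num)
    have h1 : 2 * (2 : ℝ) ^ (i - 1) = 2 ^ i := by
      rw [← zpow_one_add₀ (by norm_num)]; congr 1; ring
    have h2 : 4 * (2 : ℝ) ^ (i - 1) = 2 ^ (i + 1) := by
      rw [zpow_add_one₀ (by norm_num), ← h1]; ring
    refine le_trans ?_ (ENNReal.le_tsum (i - 1))
    rw [indicator_of_mem (by simpa [h1] using hi1), h2]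
    refine ENNReal.ofReal_le_ofReal (h.mono ?_)
    rwa [abs_of_pos (by positivity : (0 : ℝ) < 2 ^ (i + 1))]
  calc ∫⁻ x, ENNReal.ofReal (φ (g x))
      ≤ ∫⁻ x, ∑' j : ℤ, {x | 2 * (2 : ℝ) ^ j < |g x|}.indicator
          (fun _ => ENNReal.ofReal (φ (4 * 2 ^ j))) x := lintegral_mono hpt
    _ = ∑' j : ℤ, ENNReal.ofReal (φ (4 * 2 ^ j)) * volume {x | 2 * (2 : ℝ) ^ j < |g x|} := by
        rw [lintegral_tsum fun j => (measurable_const.indicator (hset j)).aemeasurable]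
        exact tsum_congr fun j => lintegral_indicator_const (hset j) _
    _ ≤ ∑' j : ℤ, ENNReal.ofReal (C * (4 : ℝ) ^ q₁ * K) *
          ∫⁻ x, ENNReal.ofReal (φ (2 ^ j) * levelGauge p q (2 ^ j) (f x)) := by
        refine ENNReal.tsum_le_tsum fun j => ?_
        have hφj := h.nonneg (2 ^ j)
        calc ENNReal.ofReal (φ (4 * 2 ^ j)) * volume {x | 2 * (2 : ℝ) ^ j < |g x|}
            ≤ ENNReal.ofReal (C * (4 : ℝ) ^ q₁ * φ (2 ^ j)) * (ENNReal.ofReal K *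
              ∫⁻ x, ENNReal.ofReal (levelGauge p q (2 ^ j) (f x))) :=
              mul_le_mul' (ENNReal.ofReal_le_ofReal (hup 4 _ (by norm_num)))
                (hfg _ (by positivity))
          _ = _ := by
              simp only [ENNReal.ofReal_mul hφj]
              rw [lintegral_const_mul' _ _ ENNReal.ofReal_ne_top, ENNReal.ofReal_mul hD0,
                ENNReal.ofReal_mul hD0]
              ring
    _ = ENNReal.ofReal (C * (4 : ℝ) ^ q₁ * K) *
          ∫⁻ x, ∑' j : ℤ, ENNReal.ofReal (φ (2 ^ j) * levelGauge p q (2 ^ j) (f x)) := by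
        have hmeas : ∀ j : ℤ, AEMeasurable fun x =>
            ENNReal.ofReal (φ (2 ^ j) * levelGauge p q (2 ^ j) (f x)) := fun j =>
          (((measurable_levelGauge p q _).comp hf).const_mul _).ennreal_ofReal.aemeasurable
        rw [ENNReal.tsum_mul_left, lintegral_tsum hmeas]
    _ ≤ ENNReal.ofReal (C * (4 : ℝ) ^ q₁ * K) *
          ∫⁻ x, ENNReal.ofReal S * ENNReal.ofReal (φ (f x)) := by
        gcongr
        exact hsum _
    _ = _ := by
        rw [lintegral_const_mul' _ _ ENNReal.ofReal_ne_top, ← mul_assoc,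
          ← ENNReal.ofReal_mul (by positivity)]

/-- Even Young functions satisfying quantitative `Δ₂` and `∇₂` conditions. -/
structure IsRegularYoung (φ : ℝ → ℝ) (D c : ℝ) : Prop extends IsEvenYoung φ where
  one_le : 1 ≤ D
  map_two_mul_le : ∀ t, φ (2 * t) ≤ D * φ t
  one_lt : 1 < c
  two_mul_le_map : ∀ t, 2 * c * φ t ≤ φ (c * t)

namespace IsRegularYoung

variable {φ : ℝ → ℝ} {D c : ℝ}

theorem map_add_le_mul (h : IsRegularYoung φ D c) (s t : ℝ) :
    φ (s + t) ≤ D * φ s + D * φ t :=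
  (h.map_add_le s t).trans (add_le_add (h.map_two_mul_le s) (h.map_two_mul_le t))

theorem lintegral_add_le (h : IsRegularYoung φ D c) {f g : ℝ → ℝ} (hf : Measurable f) :
    ∫⁻ x, ENNReal.ofReal (φ (f x + g x)) ≤ ENNReal.ofReal D *
      ((∫⁻ x, ENNReal.ofReal (φ (f x))) + ∫⁻ x, ENNReal.ofReal (φ (g x))) := by
  have hD : 0 ≤ D := zero_le_one.trans h.one_le
  have hm : Measurable fun x => ENNReal.ofReal (φ (f x)) :=
    (h.continuous.measurable.comp hf).ennreal_ofReal
  rw [← lintegral_add_left hm, ← lintegral_const_mul' _ _ ENNReal.ofReal_ne_top]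
  refine lintegral_mono fun x => ?_
  rw [← ENNReal.ofReal_add (h.nonneg _) (h.nonneg _), ← ENNReal.ofReal_mul hD, mul_add]
  exact ENNReal.ofReal_le_ofReal (h.map_add_le_mul _ _)

end IsRegularYoung

theorem IsEvenYoung.lintegral_mono {φ : ℝ → ℝ} (h : IsEvenYoung φ) {f g : ℝ → ℝ}
    (hfg : ∀ x, |f x| ≤ |g x|) :
    ∫⁻ x, ENNReal.ofReal (φ (f x)) ≤ ∫⁻ x, ENNReal.ofReal (φ (g x)) :=
  MeasureTheory.lintegral_mono fun x => ENNReal.ofReal_le_ofReal (h.mono (hfg x))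

theorem measurable_conjPoissonExt (η : ℝ) {f : ℝ → ℝ} (hf : Measurable f) :
    Measurable (conjPoissonExt η f) := by
  have : Measurable fun z : ℝ × ℝ =>
      Real.pi⁻¹ * ((z.1 - z.2) / ((z.1 - z.2) ^ 2 + η ^ 2)) * f z.2 := by fun_prop
  exact this.stronglyMeasurable.integral_prod_right'.measurable

theorem integrable_conjPoissonExt {η : ℝ} (hη : 0 < η) {f : ℝ → ℝ} (hf : Integrable f) (x : ℝ) :
    Integrable fun y => Real.pi⁻¹ * ((x - y) / ((x - y) ^ 2 + η ^ 2)) * f y := by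
  have h := (integrable_cauchyExt hf (z := x + η * Complex.I) (by simpa using hη)).im
  simpa only [RCLike.im_to_complex, cauchyKernel_im] using h

theorem integrable_poissonExt {η : ℝ} (hη : 0 < η) {f : ℝ → ℝ} (hf : Integrable f) (x : ℝ) :
    Integrable fun y => poissonDensity η (x - y) * f y := by
  have h := (integrable_cauchyExt hf (z := x + η * Complex.I) (by simpa using hη)).re
  simpa only [RCLike.re_to_complex, cauchyKernel_re] using h

theorem conjPoissonExt_add {η : ℝ} (hη : 0 < η) {f g : ℝ → ℝ} (hf : Integrable f)
    (hg : Integrable g) (x : ℝ) :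
    conjPoissonExt η (fun y => f y + g y) x = conjPoissonExt η f x + conjPoissonExt η g x := by
  rw [conjPoissonExt, conjPoissonExt, conjPoissonExt, ← integral_add
    (integrable_conjPoissonExt hη hf x) (integrable_conjPoissonExt hη hg x)]
  exact integral_congr_ae (ae_of_all _ fun y => by ring)

theorem conjPoissonExt_neg {η : ℝ} {f : ℝ → ℝ} (x : ℝ) :
    conjPoissonExt η (fun y => -f y) x = -conjPoissonExt η f x := by
  simp only [conjPoissonExt, mul_neg, integral_neg]

theorem volume_lt_abs_le {g : ℝ → ℝ} {s p : ℝ} (hs : 0 < s) (hp : 0 < p) (hg : Measurable g) :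
    volume {x | s < |g x|} ≤
      ENNReal.ofReal ((s ^ p)⁻¹) * ∫⁻ x, ENNReal.ofReal (|g x| ^ p) := by
  have hm : MeasurableSet {x | s < |g x|} := measurableSet_lt measurable_const (by fun_prop)
  rw [← lintegral_const_mul' _ _ ENNReal.ofReal_ne_top, ← lintegral_indicator_one hm]
  refine lintegral_mono (indicator_le fun x hx => ?_)
  have hx' : s < |g x| := hx
  rw [← ENNReal.ofReal_mul (by positivity), Pi.one_apply, ENNReal.one_le_ofReal,
    ← div_eq_inv_mul, one_le_div (by positivity)]
  exact Real.rpow_le_rpow hs.le hx'.le hp.le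

theorem volume_lt_abs_conjPoissonExt_le {p q C η M : ℝ} (hp : 0 < p) (hq : 0 < q)
    (hη : 0 < η)
    (hCp : ∀ f : ℝ → ℝ, Measurable f → Integrable f →
      (∀ y, 0 ≤ f y) → (∀ y, M < |y| → f y = 0) →
      ∫⁻ x, ENNReal.ofReal (|conjPoissonExt η f x| ^ p) ≤
        ENNReal.ofReal C * ∫⁻ x, ENNReal.ofReal (|f x| ^ p))
    (hCq : ∀ f : ℝ → ℝ, Measurable f → Integrable f →
      (∀ y, 0 ≤ f y) → (∀ y, M < |y| → f y = 0) →
      ∫⁻ x, ENNReal.ofReal (|conjPoissonExt η f x| ^ q) ≤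
        ENNReal.ofReal C * ∫⁻ x, ENNReal.ofReal (|f x| ^ q))
    {f : ℝ → ℝ} (hf : Measurable f) (hfi : Integrable f) (hf0 : ∀ y, 0 ≤ f y)
    (hfM : ∀ y, M < |y| → f y = 0) {s : ℝ} (hs : 0 < s) :
    volume {x | 2 * s < |conjPoissonExt η f x|} ≤
      ENNReal.ofReal C * ∫⁻ x, ENNReal.ofReal (levelGauge p q s (f x)) := by
  set S : Set ℝ := {x | s < |f x|} with hS
  have hSm : MeasurableSet S := measurableSet_lt measurable_const (by fun_prop)
  set f₁ := S.indicator f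
  set f₂ := Sᶜ.indicator f
  have hm₁ : Measurable f₁ := hf.indicator hSm
  have hm₂ : Measurable f₂ := hf.indicator hSm.compl
  have hi₁ : Integrable f₁ := hfi.indicator hSm
  have hi₂ : Integrable f₂ := hfi.indicator hSm.compl
  have hdec : ∀ x, conjPoissonExt η f x = conjPoissonExt η f₁ x + conjPoissonExt η f₂ x := by
    intro x
    rw [← conjPoissonExt_add hη hi₁ hi₂]
    congr 1
    ext y
    exact (congrFun (indicator_self_add_compl S f) y).symm
  have h₁ := hCp f₁ hm₁ hi₁ (fun y => indicator_nonneg (fun y _ => hf0 y) y)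
    (fun y hy => by simp [f₁, indicator_apply, hfM y hy])
  have h₂ := hCq f₂ hm₂ hi₂ (fun y => indicator_nonneg (fun y _ => hf0 y) y)
    (fun y hy => by simp [f₂, indicator_apply, hfM y hy])
  have hsub : {x | 2 * s < |conjPoissonExt η f x|} ⊆
      {x | s < |conjPoissonExt η f₁ x|} ∪ {x | s < |conjPoissonExt η f₂ x|} := by
    intro x hx
    by_contra hcon
    simp only [mem_union, mem_ofPred_eq, not_or, not_lt] at hcon hx
    rw [hdec] at hx
    have := abs_add_le (conjPoissonExt η f₁ x) (conjPoissonExt η f₂ x)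
    linarith
  have hgauge : ∀ x, ENNReal.ofReal (levelGauge p q s (f x)) =
      ENNReal.ofReal ((s ^ p)⁻¹) * ENNReal.ofReal (|f₁ x| ^ p) +
      ENNReal.ofReal ((s ^ q)⁻¹) * ENNReal.ofReal (|f₂ x| ^ q) := by
    intro x
    rw [← ENNReal.ofReal_mul (by positivity), ← ENNReal.ofReal_mul (by positivity), levelGauge]
    by_cases hx : x ∈ S
    · have hx' : s < |f x| := hx
      simp only [f₁, f₂, indicator_of_mem hx, indicator_of_notMem (notMem_compl_iff.2 hx),
        if_pos hx', abs_zero, Real.zero_rpow hq.ne', mul_zero, ENNReal.ofReal_zero, add_zero]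
      rw [Real.div_rpow (abs_nonneg _) hs.le, div_eq_inv_mul]
    · have hx' : ¬ s < |f x| := hx
      simp only [f₁, f₂, indicator_of_notMem hx, indicator_of_mem (show x ∈ Sᶜ from hx),
        if_neg hx', abs_zero, Real.zero_rpow hp.ne', mul_zero, ENNReal.ofReal_zero, zero_add]
      rw [Real.div_rpow (abs_nonneg _) hs.le, div_eq_inv_mul]
  calc volume {x | 2 * s < |conjPoissonExt η f x|}
      ≤ volume {x | s < |conjPoissonExt η f₁ x|} + volume {x | s < |conjPoissonExt η f₂ x|} :=
        (measure_mono hsub).trans (measure_union_le _ _)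
    _ ≤ ENNReal.ofReal ((s ^ p)⁻¹) * (ENNReal.ofReal C * ∫⁻ x, ENNReal.ofReal (|f₁ x| ^ p)) +
        ENNReal.ofReal ((s ^ q)⁻¹) * (ENNReal.ofReal C * ∫⁻ x, ENNReal.ofReal (|f₂ x| ^ q)) :=
        add_le_add
          ((volume_lt_abs_le hs hp (measurable_conjPoissonExt η hm₁)).trans (by gcongr))
          ((volume_lt_abs_le hs hq (measurable_conjPoissonExt η hm₂)).trans (by gcongr))
    _ = ENNReal.ofReal C * ∫⁻ x, ENNReal.ofReal (levelGauge p q s (f x)) := by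
        simp only [hgauge]
        rw [lintegral_add_left (by fun_prop), lintegral_const_mul' _ _ ENNReal.ofReal_ne_top,
          lintegral_const_mul' _ _ ENNReal.ofReal_ne_top]
        ring

namespace IsRegularYoung

variable {φ : ℝ → ℝ} {D c : ℝ}

theorem exists_conjPoissonExt_bound_of_nonneg (h : IsRegularYoung φ D c) :
    ∃ B : ℝ, 0 ≤ B ∧ ∀ (η M : ℝ) (f : ℝ → ℝ), 0 < η → Measurable f → Integrable f →
      (∀ y, 0 ≤ f y) → (∀ y, M < |y| → f y = 0) →
      ∫⁻ x, ENNReal.ofReal (φ (conjPoissonExt η f x)) ≤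
        ENNReal.ofReal B * ∫⁻ x, ENNReal.ofReal (φ (f x)) := by
  have hc0 : 0 < c := by linarith [h.one_lt]
  have hD0 : 0 < D := by linarith [h.one_le]
  obtain ⟨q₁, hup⟩ := h.exists_upper_growth h.one_le h.map_two_mul_le
  obtain ⟨p₁, hp₁, hlow⟩ := h.exists_lower_growth h.one_lt h.two_mul_le_map
  obtain ⟨p, hp1, hpm⟩ := exists_between (lt_min hp₁ one_lt_two)
  obtain ⟨hpp, hp2⟩ := lt_min_iff.1 hpm
  obtain ⟨m, hm⟩ := exists_nat_gt (max 1 q₁)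
  obtain ⟨hm1, hmq⟩ := max_lt_iff.1 hm
  have hcosp : Real.cos (p * (Real.pi / 2)) ≠ 0 := by
    refine (Real.cos_neg_of_pi_div_two_lt_of_lt ?_ ?_).ne <;> nlinarith [Real.pi_pos]
  have hcosq : Real.cos ((4 * m : ℝ) * (Real.pi / 2)) ≠ 0 := by
    rw [show (4 * m : ℝ) * (Real.pi / 2) = m * (2 * Real.pi) by ring,
      Real.cos_nat_mul_two_pi]
    exact one_ne_zero
  obtain ⟨Cp, hCp0, hCp⟩ := exists_riesz_bound hp1 hcosp
  obtain ⟨Cq, hCq0, hCq⟩ := exists_riesz_bound (by linarith : (1 : ℝ) < 4 * m) hcosq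
  have hCpm : Cp ≤ Cp + Cq := by linarith
  have hCqm : Cq ≤ Cp + Cq := by linarith
  have hDc : D ≤ max D (2 * c) := le_max_left _ _
  have hcc : 2 * c ≤ max D (2 * c) := le_max_right _ _
  obtain ⟨B, hB, hbound⟩ := exists_lintegral_le_of_distribution_le h.toIsEvenYoung
    (p := p) (q := 4 * m) (p₁ := p₁) (q₁ := q₁) (C := max D (2 * c)) (K := Cp + Cq)
    (by positivity) (by positivity) hpp (by linarith) (by linarith)
    (fun r t hr => (hlow r t hr).trans (mul_le_mul_of_nonneg_right hcc (h.nonneg _)))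
    (fun r t hr => (hup r t hr).trans (by have := h.nonneg t; gcongr))
  refine ⟨B, hB, fun η M f hη hf hfi hf0 hfM => ?_⟩
  refine hbound f _ hf (measurable_conjPoissonExt η hf) fun s hs => ?_
  refine volume_lt_abs_conjPoissonExt_le (by linarith) (by linarith) hη
    (fun f hf hfi hf0 hfM => (hCp η M f hη hf hfi hf0 hfM).trans ?_)
    (fun f hf hfi hf0 hfM => (hCq η M f hη hf hfi hf0 hfM).trans ?_) hf hfi hf0 hfM hs <;> gcongr

theorem exists_conjPoissonExt_bound (h : IsRegularYoung φ D c) :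
    ∃ B : ℝ, 0 ≤ B ∧ ∀ (η M : ℝ) (f : ℝ → ℝ), 0 < η → Measurable f → Integrable f →
      (∀ y, M < |y| → f y = 0) →
      ∫⁻ x, ENNReal.ofReal (φ (conjPoissonExt η f x)) ≤
        ENNReal.ofReal B * ∫⁻ x, ENNReal.ofReal (φ (f x)) := by
  obtain ⟨B, hB, hbound⟩ := h.exists_conjPoissonExt_bound_of_nonneg
  have hD0 : 0 < D := by linarith [h.one_le]
  refine ⟨D * (2 * B), by positivity, fun η M f hη hf hfi hfM => ?_⟩
  have hpos := hbound η M (fun y => max (f y) 0) hη (by fun_prop) hfi.pos_part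
    (fun y => le_max_right _ _) (fun y hy => by simp [hfM y hy])
  have hneg := hbound η M (fun y => max (-f y) 0) hη (by fun_prop) hfi.neg_part
    (fun y => le_max_right _ _) (fun y hy => by simp [hfM y hy])
  have hposle := h.lintegral_mono (f := fun y => max (f y) 0) (g := f) fun x => by
    rw [abs_of_nonneg (le_max_right _ _)]; exact max_le (le_abs_self _) (abs_nonneg _)
  have hnegle := h.lintegral_mono (f := fun y => max (-f y) 0) (g := f) fun x => by
    rw [abs_of_nonneg (le_max_right _ _)]; exact max_le (neg_le_abs _) (abs_nonneg _)
  have hdec : ∀ x, conjPoissonExt η f x = conjPoissonExt η (fun y => max (f y) 0) x +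
      -conjPoissonExt η (fun y => max (-f y) 0) x := by
    intro x
    rw [← conjPoissonExt_neg, ← conjPoissonExt_add hη hfi.pos_part
      (g := fun y => -max (-f y) 0) hfi.neg_part.neg]
    congr 1
    ext y
    rcases le_total (f y) 0 with hy | hy
    · rw [max_eq_right hy, max_eq_left (by linarith)]; ring
    · rw [max_eq_left hy, max_eq_right (by linarith)]; ring
  calc ∫⁻ x, ENNReal.ofReal (φ (conjPoissonExt η f x))
      ≤ ENNReal.ofReal D * ((∫⁻ x, ENNReal.ofReal (φ (conjPoissonExt η (fun y => max (f y) 0) x))) +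
        ∫⁻ x, ENNReal.ofReal (φ (-conjPoissonExt η (fun y => max (-f y) 0) x))) := by
        simp only [hdec]
        exact h.lintegral_add_le (measurable_conjPoissonExt η (by fun_prop))
    _ ≤ ENNReal.ofReal D * ((ENNReal.ofReal B * ∫⁻ x, ENNReal.ofReal (φ (f x))) +
        ENNReal.ofReal B * ∫⁻ x, ENNReal.ofReal (φ (f x))) := by
        simp only [h.even]
        gcongr
        · exact hpos.trans (by gcongr)
        · exact hneg.trans (by gcongr)
    _ = ENNReal.ofReal (D * (2 * B)) * ∫⁻ x, ENNReal.ofReal (φ (f x)) := by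
        rw [ENNReal.ofReal_mul hD0.le, ENNReal.ofReal_mul zero_le_two, ENNReal.ofReal_ofNat]
        ring

end IsRegularYoung

/-- Convolution with the Dirichlet kernel `sin (N u) / u` of the line. -/
noncomputable def dirichletOp (N : ℝ) (f : ℝ → ℝ) (x : ℝ) : ℝ :=
  ∫ y, N * Real.sinc (N * (x - y)) * f y

theorem measurable_dirichletOp (N : ℝ) {f : ℝ → ℝ} (hf : Measurable f) :
    Measurable (dirichletOp N f) := by
  have : Measurable fun z : ℝ × ℝ => N * Real.sinc (N * (z.1 - z.2)) * f z.2 := by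
    have := Real.continuous_sinc.measurable
    fun_prop
  exact this.stronglyMeasurable.integral_prod_right'.measurable

theorem integrable_dirichletOp (N : ℝ) {f : ℝ → ℝ} (hf : Integrable f) (x : ℝ) :
    Integrable fun y => N * Real.sinc (N * (x - y)) * f y := by
  refine hf.bdd_mul (c := |N|) ?_ (ae_of_all _ fun y => ?_)
  · have := Real.continuous_sinc
    exact (by fun_prop : Continuous fun y => N * Real.sinc (N * (x - y))).aestronglyMeasurable
  · rw [norm_mul, Real.norm_eq_abs, Real.norm_eq_abs]
    exact mul_le_of_le_one_right (abs_nonneg _) (Real.abs_sinc_le_one _)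

theorem abs_sinc_sub_le {N : ℝ} (hN : 0 < N) (u : ℝ) :
    |N * Real.sinc (N * u) - Real.sin (N * u) * (u / (u ^ 2 + N⁻¹ ^ 2))| ≤
      Real.pi * poissonDensity N⁻¹ u := by
  have hden : 0 < u ^ 2 + N⁻¹ ^ 2 := by positivity
  have heq : N * Real.sinc (N * u) - Real.sin (N * u) * (u / (u ^ 2 + N⁻¹ ^ 2)) =
      Real.sinc (N * u) * (N⁻¹ / (u ^ 2 + N⁻¹ ^ 2)) := by
    have hs : Real.sin (N * u) = N * u * Real.sinc (N * u) := by
      rcases eq_or_ne (N * u) 0 with h0 | h0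
      · simp [h0]
      · rw [Real.sinc_of_ne_zero h0, mul_div_cancel₀ _ h0]
    rw [hs]
    field_simp
    ring
  rw [heq, poissonDensity, ← mul_assoc, mul_inv_cancel₀ Real.pi_ne_zero, one_mul, abs_mul,
    abs_of_pos (by positivity : 0 < N⁻¹ / (u ^ 2 + N⁻¹ ^ 2))]
  exact mul_le_of_le_one_left (by positivity) (Real.abs_sinc_le_one _)

theorem abs_dirichletOp_le {N : ℝ} (hN : 0 < N) {f : ℝ → ℝ} (hf : Integrable f) (x : ℝ) :
    |dirichletOp N f x| ≤ Real.pi * (|conjPoissonExt N⁻¹ (fun y => Real.cos (N * y) * f y) x| +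
      |conjPoissonExt N⁻¹ (fun y => Real.sin (N * y) * f y) x| +
      poissonExt N⁻¹ (fun y => |f y|) x) := by
  have hη : 0 < N⁻¹ := by positivity
  have hcos : Integrable fun y => Real.cos (N * y) * f y :=
    hf.bdd_mul (c := 1) (by fun_prop) (ae_of_all _ fun y => Real.abs_cos_le_one _)
  have hsin : Integrable fun y => Real.sin (N * y) * f y :=
    hf.bdd_mul (c := 1) (by fun_prop) (ae_of_all _ fun y => Real.abs_sin_le_one _)
  have hiC := (integrable_conjPoissonExt hη hcos x).const_mul (Real.pi * Real.sin (N * x))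
  have hiS := (integrable_conjPoissonExt hη hsin x).const_mul (Real.pi * Real.cos (N * x))
  have hsplit : dirichletOp N f x - (Real.pi * Real.sin (N * x) *
        conjPoissonExt N⁻¹ (fun y => Real.cos (N * y) * f y) x -
      Real.pi * Real.cos (N * x) * conjPoissonExt N⁻¹ (fun y => Real.sin (N * y) * f y) x) =
      ∫ y, (N * Real.sinc (N * (x - y)) -
        Real.sin (N * (x - y)) * ((x - y) / ((x - y) ^ 2 + N⁻¹ ^ 2))) * f y := by
    rw [dirichletOp, conjPoissonExt, conjPoissonExt, ← integral_const_mul, ← integral_const_mul,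
      ← integral_sub hiC hiS]
    refine (integral_sub (integrable_dirichletOp N hf x) (hiC.sub hiS)).symm.trans ?_
    refine integral_congr_ae (ae_of_all _ fun y => ?_)
    have hpi := Real.pi_ne_zero
    simp only [Pi.sub_apply]
    rw [mul_sub N x y, Real.sin_sub]
    field_simp
  have hrem : |∫ y, (N * Real.sinc (N * (x - y)) -
        Real.sin (N * (x - y)) * ((x - y) / ((x - y) ^ 2 + N⁻¹ ^ 2))) * f y| ≤
      Real.pi * poissonExt N⁻¹ (fun y => |f y|) x := by
    rw [poissonExt, ← integral_const_mul]
    rw [← Real.norm_eq_abs]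
    refine norm_integral_le_of_norm_le ((integrable_poissonExt hη hf.abs x).const_mul _)
      (ae_of_all _ fun y => ?_)
    rw [norm_mul, Real.norm_eq_abs, Real.norm_eq_abs, ← mul_assoc]
    exact mul_le_mul_of_nonneg_right (abs_sinc_sub_le hN _) (abs_nonneg _)
  rw [← hsplit] at hrem
  set Q₁ := conjPoissonExt N⁻¹ (fun y => Real.cos (N * y) * f y) x
  set Q₂ := conjPoissonExt N⁻¹ (fun y => Real.sin (N * y) * f y) x
  have h1 : |Real.pi * Real.sin (N * x) * Q₁| ≤ Real.pi * |Q₁| := by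
    rw [abs_mul, abs_mul, abs_of_pos Real.pi_pos]
    exact mul_le_mul_of_nonneg_right
      (mul_le_of_le_one_right Real.pi_pos.le (Real.abs_sin_le_one _)) (abs_nonneg _)
  have h2 : |Real.pi * Real.cos (N * x) * Q₂| ≤ Real.pi * |Q₂| := by
    rw [abs_mul, abs_mul, abs_of_pos Real.pi_pos]
    exact mul_le_mul_of_nonneg_right
      (mul_le_of_le_one_right Real.pi_pos.le (Real.abs_cos_le_one _)) (abs_nonneg _)
  rw [abs_le] at hrem h1 h2 ⊢
  constructor <;> linarith [hrem.1, hrem.2, h1.1, h1.2, h2.1, h2.2]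

theorem IsRegularYoung.exists_dirichletOp_bound {φ : ℝ → ℝ} {D c : ℝ}
    (h : IsRegularYoung φ D c) :
    ∃ B : ℝ, 0 ≤ B ∧ ∀ (N M : ℝ) (f : ℝ → ℝ), 0 < N → Measurable f → Integrable f →
      (∀ y, M < |y| → f y = 0) →
      ∫⁻ x, ENNReal.ofReal (φ (dirichletOp N f x)) ≤
        ENNReal.ofReal B * ∫⁻ x, ENNReal.ofReal (φ (f x)) := by
  obtain ⟨B, hB, hbound⟩ := h.exists_conjPoissonExt_bound
  have hD0 : 0 < D := by linarith [h.one_le]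
  refine ⟨D ^ 2 * (D * (D * (B + B) + 1)), by positivity, fun N M f hN hf hfi hfM => ?_⟩
  have hη : 0 < N⁻¹ := by positivity
  set fc : ℝ → ℝ := fun y => Real.cos (N * y) * f y with hfc
  set fs : ℝ → ℝ := fun y => Real.sin (N * y) * f y with hfs
  have hmc : Measurable fc := by fun_prop
  have hms : Measurable fs := by fun_prop
  have hcos : Integrable fc :=
    hfi.bdd_mul (c := 1) (by fun_prop) (ae_of_all _ fun y => Real.abs_cos_le_one _)
  have hsin : Integrable fs :=
    hfi.bdd_mul (c := 1) (by fun_prop) (ae_of_all _ fun y => Real.abs_sin_le_one _)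
  set I := ∫⁻ x, ENNReal.ofReal (φ (f x)) with hI
  have hQc : ∫⁻ x, ENNReal.ofReal (φ |conjPoissonExt N⁻¹ fc x|) ≤ ENNReal.ofReal B * I := by
    simp only [h.map_abs]
    refine (hbound N⁻¹ M fc hη hmc hcos fun y hy => by simp [hfc, hfM y hy]).trans ?_
    gcongr
    refine h.lintegral_mono fun x => ?_
    rw [hfc, abs_mul]
    exact mul_le_of_le_one_left (abs_nonneg _) (Real.abs_cos_le_one _)
  have hQs : ∫⁻ x, ENNReal.ofReal (φ |conjPoissonExt N⁻¹ fs x|) ≤ ENNReal.ofReal B * I := by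
    simp only [h.map_abs]
    refine (hbound N⁻¹ M fs hη hms hsin fun y hy => by simp [hfs, hfM y hy]).trans ?_
    gcongr
    refine h.lintegral_mono fun x => ?_
    rw [hfs, abs_mul]
    exact mul_le_of_le_one_left (abs_nonneg _) (Real.abs_sin_le_one _)
  have hP : ∫⁻ x, ENNReal.ofReal (φ (poissonExt N⁻¹ (fun y => |f y|) x)) ≤ I := by
    refine (h.lintegral_poisson_le hη hf.abs).trans_eq ?_
    simp only [h.map_abs, hI]
  have hmQc : Measurable fun x => |conjPoissonExt N⁻¹ fc x| :=
    (measurable_conjPoissonExt _ hmc).abs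
  have hmQs : Measurable fun x => |conjPoissonExt N⁻¹ fs x| :=
    (measurable_conjPoissonExt _ hms).abs
  set G : ℝ → ℝ := fun x => |conjPoissonExt N⁻¹ fc x| + |conjPoissonExt N⁻¹ fs x| +
    poissonExt N⁻¹ (fun y => |f y|) x with hG
  have hpt : ∀ x, φ (dirichletOp N f x) ≤ D ^ 2 * φ (G x) := fun x => by
    have h1 := abs_dirichletOp_le hN hfi x
    have h2 : |dirichletOp N f x| ≤ |2 * (2 * G x)| := by
      refine le_trans ?_ (le_abs_self _)
      have h0 : 0 ≤ G x := by
        have := (abs_nonneg _).trans h1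
        exact nonneg_of_mul_nonneg_right this Real.pi_pos
      calc |dirichletOp N f x| ≤ Real.pi * G x := h1
        _ ≤ 4 * G x := mul_le_mul_of_nonneg_right Real.pi_le_four h0
        _ = 2 * (2 * G x) := by ring
    calc φ (dirichletOp N f x) ≤ φ (2 * (2 * G x)) := h.mono h2
      _ ≤ D * (D * φ (G x)) := (h.map_two_mul_le _).trans
        (mul_le_mul_of_nonneg_left (h.map_two_mul_le _) hD0.le)
      _ = D ^ 2 * φ (G x) := by ring
  calc ∫⁻ x, ENNReal.ofReal (φ (dirichletOp N f x))
      ≤ ENNReal.ofReal (D ^ 2) * ∫⁻ x, ENNReal.ofReal (φ (G x)) := by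
        rw [← lintegral_const_mul' _ _ ENNReal.ofReal_ne_top]
        refine lintegral_mono fun x => ?_
        rw [← ENNReal.ofReal_mul (by positivity)]
        exact ENNReal.ofReal_le_ofReal (hpt x)
    _ ≤ ENNReal.ofReal (D ^ 2) * (ENNReal.ofReal D * (ENNReal.ofReal D *
          (ENNReal.ofReal B * I + ENNReal.ofReal B * I) + I)) := by
        gcongr
        refine (h.lintegral_add_le (hmQc.add hmQs)).trans ?_
        gcongr
        refine (h.lintegral_add_le hmQc).trans ?_
        gcongr
    _ = ENNReal.ofReal (D ^ 2 * (D * (D * (B + B) + 1))) * I := by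
        rw [ENNReal.ofReal_mul (by positivity), ENNReal.ofReal_mul hD0.le,
          ENNReal.ofReal_add (by positivity) zero_le_one, ENNReal.ofReal_mul hD0.le,
          ENNReal.ofReal_add hB hB, ENNReal.ofReal_one]
        ring

theorem contDiff_exp_neg_sq : ContDiff ℝ ⊤ fun y : ℝ => Real.exp (-y ^ 2) := by
  fun_prop

theorem hasDerivAt_iteratedDeriv_exp_neg_sq (k : ℕ) (x : ℝ) :
    HasDerivAt (iteratedDeriv k fun y : ℝ => Real.exp (-y ^ 2))
      (iteratedDeriv (k + 1) (fun y : ℝ => Real.exp (-y ^ 2)) x) x := by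
  rw [iteratedDeriv_succ]
  exact ((contDiff_exp_neg_sq.differentiable_iteratedDeriv k (by simp)) x).hasDerivAt

theorem iteratedDeriv_one_exp_neg_sq (x : ℝ) :
    iteratedDeriv 1 (fun y : ℝ => Real.exp (-y ^ 2)) x = -2 * x * Real.exp (-x ^ 2) := by
  have h : HasDerivAt (fun y : ℝ => Real.exp (-y ^ 2)) (Real.exp (-x ^ 2) * (-(2 * x))) x := by
    simpa using ((hasDerivAt_pow 2 x).neg).exp
  rw [iteratedDeriv_one, h.deriv]
  ring

theorem iteratedDeriv_exp_neg_sq_add_two (k : ℕ) (x : ℝ) :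
    iteratedDeriv (k + 2) (fun y : ℝ => Real.exp (-y ^ 2)) x =
      -2 * x * iteratedDeriv (k + 1) (fun y : ℝ => Real.exp (-y ^ 2)) x -
        2 * (k + 1) * iteratedDeriv k (fun y : ℝ => Real.exp (-y ^ 2)) x := by
  induction k generalizing x with
  | zero =>
    have h := (((hasDerivAt_id x).const_mul (-2)).mul (hasDerivAt_iteratedDeriv_exp_neg_sq 0 x))
    have hfun : (iteratedDeriv 1 fun y : ℝ => Real.exp (-y ^ 2)) =
        (fun y : ℝ => -2 * id y) * iteratedDeriv 0 (fun y : ℝ => Real.exp (-y ^ 2)) := by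
      ext y; simp [iteratedDeriv_one_exp_neg_sq]
    rw [← hfun] at h
    rw [(hasDerivAt_iteratedDeriv_exp_neg_sq 1 x).unique h]
    simp
    ring
  | succ k ih =>
    have h := (((hasDerivAt_id x).const_mul (-2)).mul
      (hasDerivAt_iteratedDeriv_exp_neg_sq (k + 1) x)).sub
      ((hasDerivAt_iteratedDeriv_exp_neg_sq k x).const_mul (2 * ((k : ℝ) + 1)))
    have hfun : (iteratedDeriv (k + 2) fun y : ℝ => Real.exp (-y ^ 2)) =
        (fun y : ℝ => -2 * id y) * iteratedDeriv (k + 1) (fun y : ℝ => Real.exp (-y ^ 2)) -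
        fun y => 2 * ((k : ℝ) + 1) * iteratedDeriv k (fun y : ℝ => Real.exp (-y ^ 2)) y := by
      ext y; simp [ih]
    rw [← hfun] at h
    rw [(hasDerivAt_iteratedDeriv_exp_neg_sq (k + 2) x).unique h]
    simp
    ring

/-- The oscillation frequency `√(2(n+1))` of the Hermite functions of index `n` near the
origin. -/
noncomputable def hermiteFreq (n : ℕ) : ℝ := √(2 * (n + 1))

theorem hermiteFreq_pos (n : ℕ) : 0 < hermiteFreq n := by
  unfold hermiteFreq; positivity

theorem hermiteFreq_sq (n : ℕ) : hermiteFreq n ^ 2 = 2 * (n + 1) :=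
  Real.sq_sqrt (by positivity)

/-- The signed normalising constant of the `k`-th Hermite function. -/
noncomputable def hermiteCoeff (k : ℕ) : ℝ :=
  (-1 : ℝ) ^ k * (Real.pi ^ (-(1 : ℝ) / 4) * (2 : ℝ) ^ (-(k : ℝ) / 2) *
    ((k.factorial : ℝ)) ^ (-(1 : ℝ) / 2))

theorem hermiteFun_eq (k : ℕ) (x : ℝ) : hermiteFun k x = hermiteCoeff k * Real.exp (x ^ 2 / 2) *
    iteratedDeriv k (fun y : ℝ => Real.exp (-y ^ 2)) x := rfl

theorem hermiteFreq_mul_hermiteCoeff_succ (k : ℕ) :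
    hermiteFreq k * hermiteCoeff (k + 1) = -hermiteCoeff k := by
  have h2 : (2 : ℝ) ^ (-((k + 1 : ℕ) : ℝ) / 2) = 2 ^ (-(k : ℝ) / 2) * 2 ^ (-(1 : ℝ) / 2) := by
    rw [← Real.rpow_add (by norm_num)]; push_cast; ring_nf
  have h3 : (((k + 1).factorial : ℕ) : ℝ) ^ (-(1 : ℝ) / 2) =
      ((k : ℝ) + 1) ^ (-(1 : ℝ) / 2) * (k.factorial : ℝ) ^ (-(1 : ℝ) / 2) := by
    rw [Nat.factorial_succ]; push_cast
    rw [Real.mul_rpow (by positivity) (by positivity)]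
  have h4 : hermiteFreq k * (2 ^ (-(1 : ℝ) / 2) * ((k : ℝ) + 1) ^ (-(1 : ℝ) / 2)) = 1 := by
    rw [← Real.mul_rpow (by positivity) (by positivity), hermiteFreq, Real.sqrt_eq_rpow,
      ← Real.rpow_add (by positivity)]
    norm_num
  rw [hermiteCoeff, hermiteCoeff, h2, h3, pow_succ]
  linear_combination (-((-1 : ℝ) ^ k * (Real.pi ^ (-(1 : ℝ) / 4) * (2 : ℝ) ^ (-(k : ℝ) / 2) *
        ((k.factorial : ℝ)) ^ (-(1 : ℝ) / 2)))) * h4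

theorem hermiteFreq_zero_mul_hermiteFun_one (x : ℝ) :
    hermiteFreq 0 * hermiteFun 1 x = 2 * x * hermiteFun 0 x := by
  have h := hermiteFreq_mul_hermiteCoeff_succ 0
  rw [zero_add] at h
  rw [hermiteFun_eq, hermiteFun_eq, iteratedDeriv_one_exp_neg_sq, iteratedDeriv_zero]
  linear_combination (-2 * x * Real.exp (x ^ 2 / 2) * Real.exp (-x ^ 2)) * h

theorem hermiteFreq_mul_hermiteFun_add_two (k : ℕ) (x : ℝ) :
    hermiteFreq (k + 1) * hermiteFun (k + 2) x =
      2 * x * hermiteFun (k + 1) x - hermiteFreq k * hermiteFun k x := by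
  have h1 := hermiteFreq_mul_hermiteCoeff_succ k
  have h2 := hermiteFreq_mul_hermiteCoeff_succ (k + 1)
  have hs := hermiteFreq_sq k
  rw [hermiteFun_eq, hermiteFun_eq, hermiteFun_eq, iteratedDeriv_exp_neg_sq_add_two]
  set g := iteratedDeriv k (fun y : ℝ => Real.exp (-y ^ 2)) x
  set g₁ := iteratedDeriv (k + 1) (fun y : ℝ => Real.exp (-y ^ 2)) x
  linear_combination (Real.exp (x ^ 2 / 2) * (-2 * x * g₁ - 2 * (k + 1) * g)) * h2 +
    Real.exp (x ^ 2 / 2) * g * hermiteFreq k * h1 -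
    Real.exp (x ^ 2 / 2) * g * hermiteCoeff (k + 1) * hs

theorem hasDerivAt_hermiteFun (k : ℕ) (x : ℝ) :
    HasDerivAt (hermiteFun k) (x * hermiteFun k x - hermiteFreq k * hermiteFun (k + 1) x) x := by
  have h1 := hermiteFreq_mul_hermiteCoeff_succ k
  have hexp : HasDerivAt (fun y : ℝ => Real.exp (y ^ 2 / 2)) (Real.exp (x ^ 2 / 2) * x) x := by
    simpa using ((hasDerivAt_pow 2 x).div_const 2).exp
  have h := (hexp.const_mul (hermiteCoeff k)).mul (hasDerivAt_iteratedDeriv_exp_neg_sq k x)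
  have hfun : hermiteFun k = (fun y => hermiteCoeff k * Real.exp (y ^ 2 / 2)) *
      iteratedDeriv k (fun y : ℝ => Real.exp (-y ^ 2)) := rfl
  rw [← hfun] at h
  refine h.congr_deriv ?_
  rw [hermiteFun_eq, hermiteFun_eq]
  linear_combination Real.exp (x ^ 2 / 2) *
    iteratedDeriv (k + 1) (fun y : ℝ => Real.exp (-y ^ 2)) x * h1

theorem hasDerivAt_hermiteFun_succ (k : ℕ) (x : ℝ) :
    HasDerivAt (hermiteFun (k + 1))
      (hermiteFreq k * hermiteFun k x - x * hermiteFun (k + 1) x) x := by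
  refine (hasDerivAt_hermiteFun (k + 1) x).congr_deriv ?_
  rw [hermiteFreq_mul_hermiteFun_add_two]
  ring

theorem continuous_hermiteFun (k : ℕ) : Continuous (hermiteFun k) :=
  continuous_iff_continuousAt.2 fun x => (hasDerivAt_hermiteFun k x).continuousAt

/-- The kernel of the `n`-th Hermite partial sum operator. -/
noncomputable def hermiteKernel (n : ℕ) (x y : ℝ) : ℝ :=
  ∑ k ∈ Finset.range (n + 1), hermiteFun k x * hermiteFun k y

/-- The Christoffel-Darboux formula for Hermite functions. -/
theorem sub_mul_hermiteKernel (n : ℕ) (x y : ℝ) :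
    (x - y) * hermiteKernel n x y = hermiteFreq n / 2 *
      (hermiteFun (n + 1) x * hermiteFun n y - hermiteFun n x * hermiteFun (n + 1) y) := by
  induction n with
  | zero =>
    have hx := hermiteFreq_zero_mul_hermiteFun_one x
    have hy := hermiteFreq_zero_mul_hermiteFun_one y
    simp only [hermiteKernel, zero_add, Finset.sum_range_one]
    linear_combination -(hermiteFun 0 y / 2) * hx + (hermiteFun 0 x / 2) * hy
  | succ n ih =>
    have hx := hermiteFreq_mul_hermiteFun_add_two n x
    have hy := hermiteFreq_mul_hermiteFun_add_two n y
    rw [hermiteKernel, Finset.sum_range_succ, mul_add]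
    rw [hermiteKernel] at ih
    rw [ih]
    linear_combination -(hermiteFun (n + 1) y / 2) * hx + (hermiteFun (n + 1) x / 2) * hy

theorem hermitePartialSum_eq_integral (n : ℕ) {f : ℝ → ℝ} (hf : Integrable f) {M : ℝ}
    (hM : ∀ y, M < |y| → f y = 0) (x : ℝ) :
    hermitePartialSum n f x = ∫ y, hermiteKernel n x y * f y := by
  have hfint : ∀ k, Integrable fun y => f y * hermiteFun k y := fun k => by
    obtain ⟨C, hC⟩ := (isCompact_Icc (a := -M) (b := M)).exists_bound_of_continuousOn
      (continuous_hermiteFun k).continuousOn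
    refine (hf.norm.const_mul C).mono' (hf.aestronglyMeasurable.mul
      (continuous_hermiteFun k).aestronglyMeasurable) (ae_of_all _ fun y => ?_)
    by_cases hy : M < |y|
    · simp [hM y hy]
    · rw [norm_mul, mul_comm]
      exact mul_le_mul_of_nonneg_right (hC y (abs_le.1 (not_lt.1 hy))) (norm_nonneg _)
  simp only [hermiteKernel, Finset.sum_mul]
  rw [integral_finsetSum _ fun k _ => ?_]
  · refine Finset.sum_congr rfl fun k _ => ?_
    rw [mul_comm, ← integral_const_mul]
    exact integral_congr_ae (ae_of_all _ fun y => by ring)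
  · exact ((hfint k).const_mul (hermiteFun k x)).congr (ae_of_all _ fun y => by ring)

/-- The amplitude of the Hermite kernel near the origin. -/
noncomputable def hermiteAmplitude (n : ℕ) : ℝ :=
  hermiteFreq n / 2 * (hermiteFun n 0 ^ 2 + hermiteFun (n + 1) 0 ^ 2)

theorem hermiteFun_one_zero : hermiteFun 1 0 = 0 := by
  have h := hermiteFreq_zero_mul_hermiteFun_one 0
  simpa [(hermiteFreq_pos 0).ne'] using h

theorem hermiteFun_zero_zero_sq_sq : (hermiteFun 0 0 ^ 2) ^ 2 = Real.pi⁻¹ := by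
  simp [hermiteFun, ← pow_mul]
  rw [← Real.rpow_natCast, ← Real.rpow_mul Real.pi_pos.le]
  norm_num [Real.rpow_neg_one]

theorem add_two_mul_hermiteFun_zero_sq (n : ℕ) :
    ((n : ℝ) + 2) * hermiteFun (n + 2) 0 ^ 2 = (n + 1) * hermiteFun n 0 ^ 2 := by
  have h := hermiteFreq_mul_hermiteFun_add_two n 0
  have h1 := hermiteFreq_sq n
  have h2 := hermiteFreq_sq (n + 1)
  push_cast at h2
  have h3 : hermiteFreq (n + 1) ^ 2 * hermiteFun (n + 2) 0 ^ 2 =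
      hermiteFreq n ^ 2 * hermiteFun n 0 ^ 2 := by
    rw [← mul_pow, ← mul_pow, h]; ring
  rw [h1, h2] at h3
  linear_combination h3 / 2

theorem hermiteFun_odd_zero (m : ℕ) : hermiteFun (2 * m + 1) 0 = 0 := by
  induction m with
  | zero => exact hermiteFun_one_zero
  | succ m ih =>
    have h := add_two_mul_hermiteFun_zero_sq (2 * m + 1)
    rw [ih] at h
    have h' : 2 * (m : ℝ) + 1 + 2 ≠ 0 := by positivity
    rw [show 2 * (m + 1) + 1 = 2 * m + 1 + 2 by ring]
    simpa [h'] using h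

theorem hermiteFun_even_zero_pow_four (m : ℕ) :
    (hermiteFun (2 * m) 0 ^ 2) ^ 2 = (Real.pi * Real.Wallis.W m * (2 * m + 1))⁻¹ := by
  induction m with
  | zero => simpa [Real.Wallis.W] using hermiteFun_zero_zero_sq_sq
  | succ m ih =>
    have h := add_two_mul_hermiteFun_zero_sq (2 * m)
    have hW := Real.Wallis.W_pos m
    push_cast at h
    have h' : hermiteFun (2 * m + 2) 0 ^ 2 =
        (2 * m + 1) / (2 * m + 2) * hermiteFun (2 * m) 0 ^ 2 := by
      field_simp; linear_combination h
    rw [show 2 * (m + 1) = 2 * m + 2 by ring, h', mul_pow, ih, Real.Wallis.W_succ]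
    have hpi := Real.pi_pos
    push_cast
    field_simp
    ring

theorem hermiteAmplitude_sq (n : ℕ) :
    hermiteAmplitude n ^ 2 = (n + 1) / (2 * ((n + 1) / 2 : ℕ) + 1) *
      (2 * Real.pi * Real.Wallis.W ((n + 1) / 2))⁻¹ := by
  have hsum : hermiteFun n 0 ^ 2 + hermiteFun (n + 1) 0 ^ 2 =
      hermiteFun (2 * ((n + 1) / 2)) 0 ^ 2 := by
    rcases Nat.even_or_odd' n with ⟨m, rfl | rfl⟩
    · rw [show (2 * m + 1) / 2 = m by omega, hermiteFun_odd_zero]; ring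
    · rw [show 2 * ((2 * m + 1 + 1) / 2) = 2 * m + 1 + 1 by omega, hermiteFun_odd_zero]; ring
  have hW := Real.Wallis.W_pos ((n + 1) / 2)
  rw [hermiteAmplitude, hsum, mul_pow, div_pow, hermiteFreq_sq, hermiteFun_even_zero_pow_four]
  field_simp

theorem hermiteAmplitude_nonneg (n : ℕ) : 0 ≤ hermiteAmplitude n := by
  have := hermiteFreq_pos n
  unfold hermiteAmplitude; positivity

theorem tendsto_hermiteAmplitude : Tendsto hermiteAmplitude atTop (nhds Real.pi⁻¹) := by
  have hpi := Real.pi_pos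
  have h2 : Tendsto (fun n : ℕ => (n + 1) / 2) atTop atTop :=
    (Nat.tendsto_div_const_atTop two_ne_zero).comp (tendsto_add_atTop_nat 1)
  have hW : Tendsto (fun n : ℕ => (2 * Real.pi * Real.Wallis.W ((n + 1) / 2))⁻¹) atTop
      (nhds (2 * Real.pi * (Real.pi / 2))⁻¹) :=
    ((Real.Wallis.tendsto_W_nhds_pi_div_two.comp h2).const_mul _).inv₀ (by positivity)
  have hfrac : Tendsto (fun n : ℕ => ((n : ℝ) + 1) / (2 * ((n + 1) / 2 : ℕ) + 1)) atTop
      (nhds 1) := by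
    have hlow : Tendsto (fun n : ℕ => ((n : ℝ) + 1) / (n + 1 + 1)) atTop (nhds 1) := by
      have := (tendsto_natCast_div_add_atTop (1 : ℝ)).comp (tendsto_add_atTop_nat 1)
      simpa [Function.comp_def] using this
    refine tendsto_of_tendsto_of_tendsto_of_le_of_le hlow tendsto_const_nhds
      (fun n => ?_) (fun n => ?_)
    · have : (2 * ((n + 1) / 2 : ℕ) : ℝ) ≤ n + 1 := by
        exact_mod_cast (by omega : 2 * ((n + 1) / 2) ≤ n + 1)
      dsimp only
      gcongr
    · have : (n : ℝ) + 1 ≤ 2 * ((n + 1) / 2 : ℕ) + 1 := by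
        exact_mod_cast (by omega : n + 1 ≤ 2 * ((n + 1) / 2) + 1)
      exact (div_le_one (by positivity)).2 this
  have hsq : Tendsto (fun n => hermiteAmplitude n ^ 2) atTop (nhds (Real.pi⁻¹ ^ 2)) := by
    simp only [hermiteAmplitude_sq]
    convert hfrac.mul hW using 2
    field_simp
  simpa only [Real.sqrt_sq (hermiteAmplitude_nonneg _), Real.sqrt_sq (inv_nonneg.2 hpi.le)]
    using hsq.sqrt

theorem norm_oscillator_sub_le {g g' q : ℝ → ℝ} {N Q T : ℝ} (hN : 0 < N) (hQ : 0 ≤ Q)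
    (hQT : 2 * (Q * T) ≤ N) (hg : ∀ x, HasDerivAt g (g' x) x)
    (hg' : ∀ x, HasDerivAt g' ((q x - N ^ 2) * g x) x) (hq : ∀ x, |x| ≤ T → |q x| ≤ Q)
    {x : ℝ} (hx : |x| ≤ T) :
    ‖Complex.exp ((N * x : ℝ) * Complex.I) * (g x + (g' x / N : ℝ) * Complex.I) -
      (g 0 + (g' 0 / N : ℝ) * Complex.I)‖ ≤
      2 * (Q * T) / N * ‖(g 0 + (g' 0 / N : ℝ) * Complex.I : ℂ)‖ := by
  set w : ℝ → ℂ := fun x =>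
    Complex.exp ((N * x : ℝ) * Complex.I) * (g x + (g' x / N : ℝ) * Complex.I) with hw
  have hT : 0 ≤ T := (abs_nonneg x).trans hx
  have hderiv : ∀ x, HasDerivAt w
      (Complex.exp ((N * x : ℝ) * Complex.I) * ((q x * g x / N : ℝ) * Complex.I)) x := by
    intro x
    have h1 : HasDerivAt (fun x : ℝ => Complex.exp ((N * x : ℝ) * Complex.I))
        (Complex.exp ((N * x : ℝ) * Complex.I) * (((N * 1 : ℝ) : ℂ) * Complex.I)) x :=
      ((((hasDerivAt_id x).const_mul N).ofReal_comp).mul_const Complex.I).cexp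
    have h2 := ((hg x).ofReal_comp).add ((((hg' x).div_const N).ofReal_comp).mul_const Complex.I)
    refine (h1.mul h2).congr_deriv ?_
    have hNc : (N : ℂ) ≠ 0 := by exact_mod_cast hN.ne'
    simp only [Pi.add_apply]
    push_cast
    field_simp
    linear_combination (N * g' x : ℂ) * Complex.I_sq
  have hwcont : Continuous w := continuous_iff_continuousAt.2 fun x => (hderiv x).continuousAt
  have hnorm : ∀ x, ‖w x‖ = ‖(g x + (g' x / N : ℝ) * Complex.I : ℂ)‖ := fun x => by
    rw [hw, norm_mul, Complex.norm_exp_ofReal_mul_I, one_mul]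
  have hgw : ∀ x, |g x| ≤ ‖w x‖ := fun x => by
    rw [hnorm]
    simpa using Complex.abs_re_le_norm (g x + (g' x / N : ℝ) * Complex.I : ℂ)
  obtain ⟨x₁, hx₁, hmax⟩ := (isCompact_Icc (a := -T) (b := T)).exists_isMaxOn
    ⟨0, by simpa using hT⟩ hwcont.norm.continuousOn
  have hmax' : ∀ y, |y| ≤ T → ‖w y‖ ≤ ‖w x₁‖ := fun y hy => hmax (abs_le.1 hy)
  have hstep : ∀ y, |y| ≤ T → ‖w y - w 0‖ ≤ Q * T / N * ‖w x₁‖ := by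
    intro y hy
    have := (convex_Icc (-T) T).norm_image_sub_le_of_norm_hasDerivWithin_le (f := w)
      (C := Q / N * ‖w x₁‖) (fun z _ => (hderiv z).hasDerivWithinAt) (fun z hz => ?_)
      (show (0 : ℝ) ∈ Icc (-T) T by simpa using hT) (abs_le.1 hy)
    · calc ‖w y - w 0‖ ≤ Q / N * ‖w x₁‖ * ‖y - 0‖ := this
        _ ≤ Q / N * ‖w x₁‖ * T := by
          rw [sub_zero, Real.norm_eq_abs]; gcongr
        _ = _ := by ring
    · have hz' : |z| ≤ T := abs_le.2 hz
      rw [norm_mul, Complex.norm_exp_ofReal_mul_I, one_mul, norm_mul, Complex.norm_I, mul_one,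
        Complex.norm_real, Real.norm_eq_abs, abs_div, abs_mul, abs_of_pos hN, mul_div_right_comm]
      exact mul_le_mul (div_le_div_of_nonneg_right (hq z hz') hN.le)
        ((hgw z).trans (hmax' z hz')) (abs_nonneg _) (by positivity)
  have hε : Q * T / N ≤ 1 / 2 := by rw [div_le_div_iff₀ hN two_pos]; linarith
  have hε0 : 0 ≤ Q * T / N := by positivity
  have hw0 : w 0 = g 0 + (g' 0 / N : ℝ) * Complex.I := by simp [hw]
  have hbound : ‖w x₁‖ ≤ 2 * ‖w 0‖ := by
    have h1 := hstep x₁ (abs_le.2 hx₁)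
    have h2 := norm_sub_norm_le (w x₁) (w 0)
    nlinarith [norm_nonneg (w x₁)]
  rw [← hw0]
  calc ‖w x - w 0‖ ≤ Q * T / N * ‖w x₁‖ := hstep x hx
    _ ≤ Q * T / N * (2 * ‖w 0‖) := by gcongr
    _ = _ := by ring

/-- Solutions of second-order equations with nearly constant frequency are close to harmonic
oscillations. -/
theorem abs_oscillator_sub_le {g g' q : ℝ → ℝ} {N Q T : ℝ} (hN : 0 < N) (hQ : 0 ≤ Q)
    (hQT : 2 * (Q * T) ≤ N) (hg : ∀ x, HasDerivAt g (g' x) x)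
    (hg' : ∀ x, HasDerivAt g' ((q x - N ^ 2) * g x) x) (hq : ∀ x, |x| ≤ T → |q x| ≤ Q)
    {x : ℝ} (hx : |x| ≤ T) :
    |g x - (g 0 * Real.cos (N * x) + g' 0 / N * Real.sin (N * x))| ≤
        2 * (Q * T) / N * √(g 0 ^ 2 + (g' 0 / N) ^ 2) ∧
      |g' x / N - (g' 0 / N * Real.cos (N * x) - g 0 * Real.sin (N * x))| ≤
        2 * (Q * T) / N * √(g 0 ^ 2 + (g' 0 / N) ^ 2) := by
  have h := norm_oscillator_sub_le hN hQ hQT hg hg' hq hx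
  have hn : ‖(g 0 + (g' 0 / N : ℝ) * Complex.I : ℂ)‖ = √(g 0 ^ 2 + (g' 0 / N) ^ 2) :=
    Complex.norm_add_mul_I _ _
  rw [hn] at h
  set ζ : ℂ := g x + (g' x / N : ℝ) * Complex.I -
    Complex.exp (-((N * x : ℝ) * Complex.I)) * (g 0 + (g' 0 / N : ℝ) * Complex.I) with hζ
  have hexp : Complex.exp ((N * x : ℝ) * Complex.I) *
      Complex.exp (-((N * x : ℝ) * Complex.I)) = 1 := by
    rw [← Complex.exp_add, add_neg_cancel, Complex.exp_zero]
  have hζn : ‖ζ‖ ≤ 2 * (Q * T) / N * √(g 0 ^ 2 + (g' 0 / N) ^ 2) := by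
    refine le_trans (le_of_eq ?_) h
    rw [← one_mul ‖ζ‖, ← Complex.norm_exp_ofReal_mul_I (N * x), ← norm_mul, hζ, mul_sub,
      ← mul_assoc (Complex.exp _) (Complex.exp _), hexp, one_mul]
  have hexp' : Complex.exp (-((N * x : ℝ) * Complex.I)) =
      Real.cos (N * x) - Real.sin (N * x) * Complex.I := by
    rw [← neg_mul, ← Complex.ofReal_neg, Complex.exp_ofReal_mul_I, Real.cos_neg, Real.sin_neg]
    push_cast; ring
  have hζ' : ζ = ((g x - (g 0 * Real.cos (N * x) + g' 0 / N * Real.sin (N * x)) : ℝ) : ℂ) +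
      ((g' x / N - (g' 0 / N * Real.cos (N * x) - g 0 * Real.sin (N * x)) : ℝ) : ℂ) *
        Complex.I := by
    rw [hζ, hexp']
    push_cast
    linear_combination (Complex.sin (N * x) * (g' 0 / N)) * Complex.I_sq
  refine ⟨le_trans (le_of_eq ?_) ((Complex.abs_re_le_norm ζ).trans hζn),
    le_trans (le_of_eq ?_) ((Complex.abs_im_le_norm ζ).trans hζn)⟩
  · rw [hζ', Complex.add_re, Complex.ofReal_re, Complex.re_ofReal_mul, Complex.I_re, mul_zero,
      add_zero]
  · rw [hζ', Complex.add_im, Complex.ofReal_im, Complex.im_ofReal_mul, Complex.I_im, mul_one,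
      zero_add]

/-- The leading term of `hermiteFun n` near the origin. -/
noncomputable def hermiteApprox (n : ℕ) (x : ℝ) : ℝ :=
  hermiteFun n 0 * Real.cos (hermiteFreq n * x) -
    hermiteFun (n + 1) 0 * Real.sin (hermiteFreq n * x)

/-- The leading term of `hermiteFun (n + 1)` near the origin. -/
noncomputable def hermiteApproxSucc (n : ℕ) (x : ℝ) : ℝ :=
  hermiteFun (n + 1) 0 * Real.cos (hermiteFreq n * x) +
    hermiteFun n 0 * Real.sin (hermiteFreq n * x)

/-- The amplitude of the oscillations of `hermiteFun n` near the origin. -/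
noncomputable def hermiteRadius (n : ℕ) : ℝ :=
  √(hermiteFun n 0 ^ 2 + hermiteFun (n + 1) 0 ^ 2)

theorem hermiteApprox_sq_add_sq (n : ℕ) (x : ℝ) :
    hermiteApprox n x ^ 2 + hermiteApproxSucc n x ^ 2 = hermiteRadius n ^ 2 := by
  rw [hermiteRadius, Real.sq_sqrt (by positivity), hermiteApprox, hermiteApproxSucc]
  linear_combination (hermiteFun n 0 ^ 2 + hermiteFun (n + 1) 0 ^ 2) *
    Real.sin_sq_add_cos_sq (hermiteFreq n * x)

theorem hermiteRadius_nonneg (n : ℕ) : 0 ≤ hermiteRadius n := Real.sqrt_nonneg _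

theorem abs_hermiteApprox_le (n : ℕ) (x : ℝ) : |hermiteApprox n x| ≤ hermiteRadius n :=
  abs_le_of_sq_le_sq (by nlinarith [hermiteApprox_sq_add_sq n x]) (hermiteRadius_nonneg n)

theorem abs_hermiteApproxSucc_le (n : ℕ) (x : ℝ) : |hermiteApproxSucc n x| ≤ hermiteRadius n :=
  abs_le_of_sq_le_sq (by nlinarith [hermiteApprox_sq_add_sq n x]) (hermiteRadius_nonneg n)

theorem hermiteApproxSucc_mul_sub (n : ℕ) (x y : ℝ) :
    hermiteFreq n / 2 * (hermiteApproxSucc n x * hermiteApprox n y -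
      hermiteApprox n x * hermiteApproxSucc n y) =
      hermiteAmplitude n * Real.sin (hermiteFreq n * (x - y)) := by
  rw [mul_sub (hermiteFreq n) x, Real.sin_sub, hermiteAmplitude, hermiteApprox,
    hermiteApprox, hermiteApproxSucc,
    hermiteApproxSucc]
  ring

theorem hasDerivAt_hermiteApprox (n : ℕ) (x : ℝ) :
    HasDerivAt (hermiteApprox n) (-hermiteFreq n * hermiteApproxSucc n x) x := by
  have hl := (hasDerivAt_id x).const_mul (hermiteFreq n)
  refine ((hl.cos.const_mul (hermiteFun n 0)).sub
    (hl.sin.const_mul (hermiteFun (n + 1) 0))).congr_deriv ?_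
  simp only [id, hermiteApproxSucc]
  ring

theorem hasDerivAt_hermiteApproxSucc (n : ℕ) (x : ℝ) :
    HasDerivAt (hermiteApproxSucc n) (hermiteFreq n * hermiteApprox n x) x := by
  have hl := (hasDerivAt_id x).const_mul (hermiteFreq n)
  refine ((hl.cos.const_mul (hermiteFun (n + 1) 0)).add
    (hl.sin.const_mul (hermiteFun n 0))).congr_deriv ?_
  simp only [id, hermiteApprox]
  ring

/-- Error of the harmonic approximation of the Hermite functions on `[-T, T]`. -/
noncomputable def hermiteError (n : ℕ) (T : ℝ) : ℝ :=
  2 * ((T ^ 2 + 1) * T) / hermiteFreq n * hermiteRadius n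

theorem abs_hermiteFun_sub_le (n : ℕ) {T : ℝ} (hT : 2 * ((T ^ 2 + 1) * T) ≤ hermiteFreq n)
    {x : ℝ} (hx : |x| ≤ T) :
    |hermiteFun n x - hermiteApprox n x| ≤ hermiteError n T ∧
      |x * hermiteFun n x - hermiteFreq n * hermiteFun (n + 1) x -
        -hermiteFreq n * hermiteApproxSucc n x| ≤ hermiteFreq n * hermiteError n T := by
  have hb := hermiteFreq_pos n
  have hsq := hermiteFreq_sq n
  have h := abs_oscillator_sub_le (g := hermiteFun n)
    (g' := fun x => x * hermiteFun n x - hermiteFreq n * hermiteFun (n + 1) x)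
    (q := fun x => x ^ 2 + 1) (Q := T ^ 2 + 1) hb (by positivity) hT (hasDerivAt_hermiteFun n)
    (fun x => (((hasDerivAt_id x).mul (hasDerivAt_hermiteFun n x)).sub
      ((hasDerivAt_hermiteFun_succ n x).const_mul _)).congr_deriv (by simp only [id]; ring))
    (fun x hx => by
      rw [abs_of_nonneg (by positivity), ← sq_abs x]
      have := abs_nonneg x
      gcongr) hx
  have h0 : (0 * hermiteFun n 0 - hermiteFreq n * hermiteFun (n + 1) 0) / hermiteFreq n =
      -hermiteFun (n + 1) 0 := by field_simp; ring
  simp only [h0, neg_sq] at h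
  refine ⟨le_trans (le_of_eq ?_) h.1, ?_⟩
  · rw [hermiteApprox]; ring_nf
  · have h2 := mul_le_mul_of_nonneg_left h.2 hb.le
    refine le_trans (le_of_eq ?_) h2
    rw [← abs_of_pos hb, ← abs_mul, abs_of_pos hb, hermiteApproxSucc]
    congr 1
    field_simp
    ring

theorem abs_hermiteFun_succ_sub_le (n : ℕ) {T : ℝ}
    (hT : 2 * ((T ^ 2 + 1) * T) ≤ hermiteFreq n) {x : ℝ} (hx : |x| ≤ T) :
    |hermiteFun (n + 1) x - hermiteApproxSucc n x| ≤ hermiteError n T ∧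
      |hermiteFreq n * hermiteFun n x - x * hermiteFun (n + 1) x -
        hermiteFreq n * hermiteApprox n x| ≤ hermiteFreq n * hermiteError n T := by
  have hb := hermiteFreq_pos n
  have hsq := hermiteFreq_sq n
  have h := abs_oscillator_sub_le (g := hermiteFun (n + 1))
    (g' := fun x => hermiteFreq n * hermiteFun n x - x * hermiteFun (n + 1) x)
    (q := fun x => x ^ 2 - 1) (Q := T ^ 2 + 1) hb (by positivity) hT
    (hasDerivAt_hermiteFun_succ n)
    (fun x => (((hasDerivAt_hermiteFun n x).const_mul _).sub
      ((hasDerivAt_id x).mul (hasDerivAt_hermiteFun_succ n x))).congr_deriv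
      (by simp only [id]; ring))
    (fun x hx => by
      have := sq_le_sq' (abs_le.1 hx).1 (abs_le.1 hx).2
      rw [abs_le]; constructor <;> nlinarith [sq_nonneg x]) hx
  have h0 : (hermiteFreq n * hermiteFun n 0 - 0 * hermiteFun (n + 1) 0) / hermiteFreq n =
      hermiteFun n 0 := by field_simp; ring
  simp only [h0] at h
  rw [add_comm (hermiteFun (n + 1) 0 ^ 2)] at h
  refine ⟨h.1, ?_⟩
  have h2 := mul_le_mul_of_nonneg_left h.2 hb.le
  refine le_trans (le_of_eq ?_) h2
  rw [← abs_of_pos hb, ← abs_mul, abs_of_pos hb, hermiteApprox]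
  congr 1
  field_simp

theorem abs_mul_sub_mul_le {a a' b b' α δ ρ : ℝ} (hα : 0 ≤ α) (hδ : 0 ≤ δ) (hδρ : δ ≤ ρ)
    (ha : |a - a'| ≤ α * δ) (hb : |b - b'| ≤ δ) (ha' : |a'| ≤ α * ρ) (hb' : |b'| ≤ ρ) :
    |a * b - a' * b'| ≤ 3 * (α * (ρ * δ)) := by
  have hρ : 0 ≤ ρ := hδ.trans hδρ
  calc |a * b - a' * b'| = |(a - a') * (b - b') + (a - a') * b' + a' * (b - b')| := by ring_nf
    _ ≤ |(a - a') * (b - b')| + |(a - a') * b'| + |a' * (b - b')| := abs_add_three _ _ _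
    _ ≤ (α * δ) * ρ + (α * δ) * ρ + (α * ρ) * δ := by
        rw [abs_mul, abs_mul, abs_mul]
        gcongr
        exact hb.trans hδρ
    _ = _ := by ring

theorem hermiteAmplitude_eq (n : ℕ) :
    hermiteAmplitude n = hermiteFreq n / 2 * hermiteRadius n ^ 2 := by
  rw [hermiteRadius, Real.sq_sqrt (by positivity), hermiteAmplitude]

theorem abs_sub_mul_hermiteKernel_le (n : ℕ) {T : ℝ} (hT0 : 0 ≤ T)
    (hT : 2 * ((T ^ 2 + 1) * T) ≤ hermiteFreq n) {x y : ℝ} (hx : |x| ≤ T) (hy : |y| ≤ T) :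
    |(x - y) * hermiteKernel n x y - hermiteAmplitude n * Real.sin (hermiteFreq n * (x - y))| ≤
        12 * hermiteAmplitude n * ((T ^ 2 + 1) * T) / hermiteFreq n ∧
      |(x - y) * hermiteKernel n x y - hermiteAmplitude n * Real.sin (hermiteFreq n * (x - y))| ≤
        12 * hermiteAmplitude n * ((T ^ 2 + 1) * T) * |x - y| := by
  have hN := hermiteFreq_pos n
  set N := hermiteFreq n with hNdef
  set ρ := hermiteRadius n with hρ
  set δ := hermiteError n T with hδ
  have hδ' : δ = 2 * ((T ^ 2 + 1) * T) / N * ρ := rfl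
  have hρ0 : 0 ≤ ρ := hermiteRadius_nonneg n
  have hδ0 : 0 ≤ δ := by rw [hδ']; positivity
  have hδρ : δ ≤ ρ := by
    rw [hδ']
    exact mul_le_of_le_one_left hρ0 ((div_le_one hN).2 hT)
  have hsmall : ∀ z, |z| ≤ T → |hermiteFun n z - hermiteApprox n z| ≤ 1 * δ := fun z hz => by
    rw [one_mul]; exact (abs_hermiteFun_sub_le n hT hz).1
  have hsmall' : ∀ z, |z| ≤ T → |hermiteFun (n + 1) z - hermiteApproxSucc n z| ≤ 1 * δ :=
    fun z hz => by rw [one_mul]; exact (abs_hermiteFun_succ_sub_le n hT hz).1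
  set W : ℝ → ℝ := fun z => N / 2 *
    ((hermiteFun (n + 1) z * hermiteFun n y - hermiteApproxSucc n z * hermiteApprox n y) -
      (hermiteFun n z * hermiteFun (n + 1) y - hermiteApprox n z * hermiteApproxSucc n y)) with hW
  have hWeq : (x - y) * hermiteKernel n x y - hermiteAmplitude n * Real.sin (N * (x - y)) =
      W x := by
    rw [sub_mul_hermiteKernel, ← hermiteApproxSucc_mul_sub, hW]
    ring
  have hsize : 12 * hermiteAmplitude n * ((T ^ 2 + 1) * T) = N * (3 * (N * (ρ * δ))) := by
    rw [hermiteAmplitude_eq, hδ']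
    field_simp
    ring
  rw [hWeq, hsize, mul_div_cancel_left₀ _ hN.ne']
  constructor
  · have h1 := abs_mul_sub_mul_le zero_le_one hδ0 hδρ (hsmall' x hx) (by simpa using hsmall y hy)
      (by simpa using abs_hermiteApproxSucc_le n x) (abs_hermiteApprox_le n y)
    have h2 := abs_mul_sub_mul_le zero_le_one hδ0 hδρ (hsmall x hx) (by simpa using hsmall' y hy)
      (by simpa using abs_hermiteApprox_le n x) (abs_hermiteApproxSucc_le n y)
    rw [hW, abs_mul, abs_of_pos (by positivity : 0 < N / 2)]
    calc N / 2 * |_ - _| ≤ N / 2 * (3 * (1 * (ρ * δ)) + 3 * (1 * (ρ * δ))) := by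
          gcongr
          exact (abs_sub _ _).trans (add_le_add h1 h2)
      _ = _ := by ring
  · have hWy : W y = 0 := by rw [hW]; ring
    have hderiv : ∀ z, HasDerivAt W (N / 2 *
        (((N * hermiteFun n z - z * hermiteFun (n + 1) z) * hermiteFun n y -
          N * hermiteApprox n z * hermiteApprox n y) -
        ((z * hermiteFun n z - N * hermiteFun (n + 1) z) * hermiteFun (n + 1) y -
          -N * hermiteApproxSucc n z * hermiteApproxSucc n y))) z := fun z =>
      ((((hasDerivAt_hermiteFun_succ n z).mul_const _).sub
        ((hasDerivAt_hermiteApproxSucc n z).mul_const _)).sub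
        (((hasDerivAt_hermiteFun n z).mul_const _).sub
        ((hasDerivAt_hermiteApprox n z).mul_const _))).const_mul _
    have := (convex_Icc (-T) T).norm_image_sub_le_of_norm_hasDerivWithin_le (f := W)
      (C := N * (3 * (N * (ρ * δ)))) (fun z _ => (hderiv z).hasDerivWithinAt) (fun z hz => ?_)
      (abs_le.1 hy) (abs_le.1 hx)
    · simpa [hWy] using this
    · have hz' : |z| ≤ T := abs_le.2 hz
      have h1 := abs_mul_sub_mul_le hN.le hδ0 hδρ (abs_hermiteFun_succ_sub_le n hT hz').2
        (by simpa using hsmall y hy) (by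
          rw [abs_mul, abs_of_pos hN]
          exact mul_le_mul_of_nonneg_left (abs_hermiteApprox_le n z) hN.le)
        (abs_hermiteApprox_le n y)
      have h2 := abs_mul_sub_mul_le hN.le hδ0 hδρ (abs_hermiteFun_sub_le n hT hz').2
        (by simpa using hsmall' y hy) (by
          rw [abs_mul, abs_neg, abs_of_pos hN]
          exact mul_le_mul_of_nonneg_left (abs_hermiteApproxSucc_le n z) hN.le)
        (abs_hermiteApproxSucc_le n y)
      rw [Real.norm_eq_abs, abs_mul, abs_of_pos (by positivity : 0 < N / 2)]
      calc N / 2 * |_ - _| ≤ N / 2 * (3 * (N * (ρ * δ)) + 3 * (N * (ρ * δ))) := by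
            gcongr
            exact (abs_sub _ _).trans (add_le_add h1 h2)
        _ = _ := by ring

/-- The height of the Poisson kernel dominating the error of the Hermite kernel. -/
noncomputable def hermiteHeight (n : ℕ) (T : ℝ) : ℝ := √(2 * T / hermiteFreq n)

/-- The size of the operator bounding the error of the Hermite kernel. -/
noncomputable def hermiteRemainder (n : ℕ) (T : ℝ) : ℝ :=
  24 * Real.pi * hermiteAmplitude n * ((T ^ 2 + 1) * T) * hermiteHeight n T

theorem hermiteHeight_pos (n : ℕ) {T : ℝ} (hT : 0 < T) : 0 < hermiteHeight n T := by
  have := hermiteFreq_pos n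
  unfold hermiteHeight; positivity

theorem abs_hermiteKernel_sub_le (n : ℕ) {T : ℝ} (hT0 : 0 < T)
    (hT : 2 * ((T ^ 2 + 1) * T) ≤ hermiteFreq n) {x y : ℝ} (hx : |x| ≤ T) (hy : |y| ≤ T)
    (hxy : x ≠ y) :
    |hermiteKernel n x y -
        hermiteAmplitude n * (hermiteFreq n * Real.sinc (hermiteFreq n * (x - y)))| ≤
      hermiteRemainder n T * poissonDensity (hermiteHeight n T) (x - y) := by
  have hN := hermiteFreq_pos n
  have hκ := hermiteHeight_pos n hT0
  have hA := hermiteAmplitude_nonneg n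
  obtain ⟨h1, h2⟩ := abs_sub_mul_hermiteKernel_le n hT0.le hT hx hy
  have hu : x - y ≠ 0 := sub_ne_zero.2 hxy
  have hu2T : |x - y| ≤ 2 * T := (abs_sub _ _).trans (by linarith)
  have hκ2 : hermiteFreq n * hermiteHeight n T ^ 2 = 2 * T := by
    rw [hermiteHeight, Real.sq_sqrt (by positivity)]; field_simp
  set N := hermiteFreq n with hNdef
  set κ := hermiteHeight n T with hκdef
  set u := x - y with hudef
  set L := 12 * hermiteAmplitude n * ((T ^ 2 + 1) * T) with hL
  have hL0 : 0 ≤ L := by positivity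
  have hW : u * hermiteKernel n x y - hermiteAmplitude n * Real.sin (N * u) =
      u * (hermiteKernel n x y - hermiteAmplitude n * (N * Real.sinc (N * u))) := by
    rw [Real.sinc_of_ne_zero (mul_ne_zero hN.ne' hu)]
    field_simp
  rw [hW, abs_mul] at h1 h2
  set E := |hermiteKernel n x y - hermiteAmplitude n * (N * Real.sinc (N * u))|
  have hu0 : 0 < |u| := abs_pos.2 hu
  have hE1 : E ≤ L := by
    rw [mul_comm] at h2
    exact le_of_mul_le_mul_right h2 hu0
  have hE2 : E * u ^ 2 ≤ L * κ ^ 2 := by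
    have h3 : N * (|u| * E) ≤ L := by rwa [mul_comm, ← le_div_iff₀ hN]
    have h4 : N * (|u| * E) * |u| ≤ L * (N * κ ^ 2) := by
      rw [hκ2]; exact mul_le_mul h3 hu2T hu0.le hL0
    rw [← sq_abs]
    nlinarith
  have hR : hermiteRemainder n T * poissonDensity κ u = 2 * L * κ ^ 2 / (u ^ 2 + κ ^ 2) := by
    have hpi := Real.pi_ne_zero
    rw [hermiteRemainder, poissonDensity, ← hκdef, hL]
    field_simp
    ring
  rw [hR, le_div_iff₀ (by positivity)]
  nlinarith [mul_le_mul_of_nonneg_right hE1 (sq_nonneg κ)]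

theorem continuous_hermiteKernel (n : ℕ) (x : ℝ) : Continuous (hermiteKernel n x) :=
  continuous_finsetSum _ fun k _ => continuous_const.mul (continuous_hermiteFun k)

theorem abs_hermitePartialSum_sub_le (n : ℕ) {T : ℝ} (hT0 : 0 < T)
    (hT : 2 * ((T ^ 2 + 1) * T) ≤ hermiteFreq n) {f : ℝ → ℝ} (hf : Integrable f)
    (hfT : ∀ y, T < |y| → f y = 0) {x : ℝ} (hx : |x| ≤ T) :
    |hermitePartialSum n f x - hermiteAmplitude n * dirichletOp (hermiteFreq n) f x| ≤
      hermiteRemainder n T * poissonExt (hermiteHeight n T) (fun y => |f y|) x := by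
  have hfint : Integrable fun y => hermiteKernel n x y * f y := by
    obtain ⟨C, hC⟩ := (isCompact_Icc (a := -T) (b := T)).exists_bound_of_continuousOn
      (continuous_hermiteKernel n x).continuousOn
    refine (hf.norm.const_mul C).mono' ((continuous_hermiteKernel n x).aestronglyMeasurable.mul
      hf.aestronglyMeasurable) (ae_of_all _ fun y => ?_)
    by_cases hy : T < |y|
    · simp [hfT y hy]
    · rw [norm_mul]
      exact mul_le_mul_of_nonneg_right (hC y (abs_le.1 (not_lt.1 hy))) (norm_nonneg _)
  rw [hermitePartialSum_eq_integral n hf hfT, dirichletOp, poissonExt, ← integral_const_mul,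
    ← integral_const_mul, ← integral_sub hfint ((integrable_dirichletOp _ hf x).const_mul _)]
  refine (abs_integral_le_integral_abs).trans (integral_mono_ae
    (hfint.sub ((integrable_dirichletOp _ hf x).const_mul _)).abs
    ((integrable_poissonExt (hermiteHeight_pos n hT0) hf.abs x).const_mul _) ?_)
  filter_upwards [compl_mem_ae_iff.2 (measure_singleton x)] with y hy
  by_cases hyT : T < |y|
  · simp [hfT y hyT]
  · have h := abs_hermiteKernel_sub_le n hT0 hT hx (not_lt.1 hyT) (fun h => hy h.symm)
    have h' := mul_le_mul_of_nonneg_right h (abs_nonneg (f y))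
    rw [← abs_mul, sub_mul, mul_assoc] at h'
    simpa only [mul_assoc] using h'

theorem hermiteRemainder_nonneg (n : ℕ) {T : ℝ} (hT : 0 < T) : 0 ≤ hermiteRemainder n T := by
  have := hermiteHeight_pos n hT
  have := hermiteAmplitude_nonneg n
  have := Real.pi_pos
  unfold hermiteRemainder; positivity

theorem pow_le_hermiteFreq (n : ℕ) : ((n : ℝ) ^ ((1 : ℝ) / 34)) ^ 17 ≤ hermiteFreq n := by
  rw [← Real.rpow_mul_natCast n.cast_nonneg, hermiteFreq]
  rw [show (1 : ℝ) / 34 * (17 : ℕ) = 1 / 2 by norm_num, ← Real.sqrt_eq_rpow]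
  exact Real.sqrt_le_sqrt (by linarith [(n.cast_nonneg : (0 : ℝ) ≤ n)])

section Slow

variable {T : ℕ → ℝ}

theorem eventually_le_rpow
    (hT : Tendsto (fun n : ℕ => T n / (n : ℝ) ^ ((1 : ℝ) / 34)) atTop (nhds 0)) :
    ∀ᶠ n : ℕ in atTop, T n ≤ (n : ℝ) ^ ((1 : ℝ) / 34) := by
  filter_upwards [hT.eventually (gt_mem_nhds one_pos), eventually_gt_atTop 0] with n hn hn0
  have : (0 : ℝ) < (n : ℝ) ^ ((1 : ℝ) / 34) := Real.rpow_pos_of_pos (by exact_mod_cast hn0) _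
  rw [div_lt_one this] at hn
  exact hn.le

theorem tendsto_natCast_rpow : Tendsto (fun n : ℕ => (n : ℝ) ^ ((1 : ℝ) / 34)) atTop atTop :=
  (tendsto_rpow_atTop (by norm_num)).comp tendsto_natCast_atTop_atTop

theorem eventually_two_mul_le_hermiteFreq (hT0 : ∀ n, 0 < T n)
    (hT : Tendsto (fun n : ℕ => T n / (n : ℝ) ^ ((1 : ℝ) / 34)) atTop (nhds 0)) :
    ∀ᶠ n : ℕ in atTop, 2 * ((T n ^ 2 + 1) * T n) ≤ hermiteFreq n := by
  filter_upwards [eventually_le_rpow hT, tendsto_natCast_rpow.eventually_ge_atTop 2] with n hn hb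
  refine le_trans ?_ (pow_le_hermiteFreq n)
  set b := (n : ℝ) ^ ((1 : ℝ) / 34)
  have h0 := hT0 n
  calc 2 * ((T n ^ 2 + 1) * T n) ≤ 2 * ((b ^ 2 + b ^ 2) * b) := by gcongr; nlinarith
    _ = 2 ^ 2 * b ^ 3 := by ring
    _ ≤ b ^ 14 * b ^ 3 := by
      gcongr
      exact (pow_le_pow_left₀ (by norm_num) hb 2).trans
        (pow_le_pow_right₀ (by linarith) (by norm_num))
    _ = b ^ 17 := by ring

theorem tendsto_hermiteRemainder (hT0 : ∀ n, 0 < T n)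
    (hT : Tendsto (fun n : ℕ => T n / (n : ℝ) ^ ((1 : ℝ) / 34)) atTop (nhds 0)) :
    Tendsto (fun n => hermiteRemainder n (T n)) atTop (nhds 0) := by
  have hlim : Tendsto (fun n : ℕ => 24 * Real.pi * hermiteAmplitude n *
      (4 * ((n : ℝ) ^ ((1 : ℝ) / 34))⁻¹)) atTop (nhds 0) := by
    simpa using (tendsto_hermiteAmplitude.const_mul (24 * Real.pi)).mul
      (tendsto_natCast_rpow.inv_tendsto_atTop.const_mul 4)
  refine squeeze_zero' (Eventually.of_forall fun n => hermiteRemainder_nonneg n (hT0 n)) ?_ hlim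
  filter_upwards [eventually_le_rpow hT, tendsto_natCast_rpow.eventually_ge_atTop 2] with n hn hb
  have hN := pow_le_hermiteFreq n
  have hA := hermiteAmplitude_nonneg n
  have hpi := Real.pi_pos
  have h0 := hT0 n
  rw [hermiteRemainder, mul_assoc (24 * Real.pi * hermiteAmplitude n)]
  refine mul_le_mul_of_nonneg_left ?_ (by positivity)
  set b := (n : ℝ) ^ ((1 : ℝ) / 34)
  have hb0 : 0 < b := by linarith
  have h1 : (T n ^ 2 + 1) * T n ≤ 2 * b ^ 3 := by
    calc (T n ^ 2 + 1) * T n ≤ (b ^ 2 + b ^ 2) * b := by gcongr; nlinarith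
      _ = 2 * b ^ 3 := by ring
  have h2 : hermiteHeight n (T n) ≤ 2 * (b ^ 4)⁻¹ := by
    refine Real.sqrt_le_iff.2 ⟨by positivity, ?_⟩
    calc 2 * T n / hermiteFreq n ≤ 2 * b / b ^ 17 := by gcongr
      _ = 2 * (b ^ 16)⁻¹ := by field_simp
      _ ≤ 4 * (b ^ 8)⁻¹ := by
        have hb1 : 1 ≤ b := by linarith
        gcongr <;> norm_num
      _ = (2 * (b ^ 4)⁻¹) ^ 2 := by ring
  calc (T n ^ 2 + 1) * T n * hermiteHeight n (T n) ≤ 2 * b ^ 3 * (2 * (b ^ 4)⁻¹) :=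
        mul_le_mul h1 h2 (hermiteHeight_pos n h0).le (by positivity)
    _ = 4 * b⁻¹ := by field_simp; norm_num

end Slow

/-- The modular bound for the difference between Hermite and Dirichlet partial sums. -/
theorem IsEvenYoung.lintegral_hermitePartialSum_sub_le {φ : ℝ → ℝ} (h : IsEvenYoung φ) (n : ℕ)
    {T : ℝ} (hT0 : 0 < T) (hT : 2 * ((T ^ 2 + 1) * T) ≤ hermiteFreq n)
    (hR : hermiteRemainder n T ≤ 1) {f : ℝ → ℝ} (hm : Measurable f) (hf : Integrable f)
    (hfT : ∀ y, T < |y| → f y = 0) :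
    ∫⁻ x, ENNReal.ofReal (φ (indicator (Ioo (-T) T) (fun x => hermitePartialSum n f x -
      hermiteAmplitude n * dirichletOp (hermiteFreq n) f x) x)) ≤
      ENNReal.ofReal (hermiteRemainder n T) * ∫⁻ x, ENNReal.ofReal (φ (f x)) := by
  have hR0 := hermiteRemainder_nonneg n hT0
  have hκ := hermiteHeight_pos n hT0
  calc _ ≤ ∫⁻ x, ENNReal.ofReal (hermiteRemainder n T) * ENNReal.ofReal
        (φ (poissonExt (hermiteHeight n T) (fun y => |f y|) x)) := by
        refine MeasureTheory.lintegral_mono fun x => ?_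
        rw [← ENNReal.ofReal_mul hR0]
        refine ENNReal.ofReal_le_ofReal (le_trans (h.mono ?_) (h.map_mul_le hR0 hR _))
        by_cases hx : x ∈ Ioo (-T) T
        · rw [indicator_of_mem hx]
          exact (abs_hermitePartialSum_sub_le n hT0 hT hf hfT (abs_le.2 ⟨hx.1.le, hx.2.le⟩)).trans
            (le_abs_self _)
        · simpa [indicator_of_notMem hx] using by positivity
    _ ≤ _ := by
        rw [lintegral_const_mul' _ _ ENNReal.ofReal_ne_top]
        refine mul_le_mul_right ?_ _
        refine (h.lintegral_poisson_le hκ hm.abs).trans_eq ?_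
        simp only [h.map_abs]

theorem ofReal_mul_sinc_eq_integral {N : ℝ} (hN : 0 < N) (u : ℝ) :
    ((N * Real.sinc (N * u) : ℝ) : ℂ) = Real.pi *
      ∫ w in Ioc (-(N / (2 * Real.pi))) (N / (2 * Real.pi)),
        Complex.exp (↑(2 * Real.pi * (w * u)) * Complex.I) := by
  have hpi := Real.pi_pos
  rw [← intervalIntegral.integral_of_le (neg_le_self (by positivity))]
  rcases eq_or_ne u 0 with rfl | hu
  · simp only [mul_zero, Complex.ofReal_zero, zero_mul, Complex.exp_zero, Real.sinc_zero, mul_one,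
      intervalIntegral.integral_const, sub_neg_eq_add, ← Complex.ofReal_one, Complex.real_smul]
    rw [← Complex.ofReal_mul, ← Complex.ofReal_mul]
    congr 1
    field_simp
    norm_num
  · have h := intervalIntegral.integral_comp_mul_left
      (fun t : ℝ => Complex.exp (t * Complex.I)) (a := -(N / (2 * Real.pi)))
      (b := N / (2 * Real.pi)) (c := 2 * Real.pi * u) (by positivity)
    rw [show 2 * Real.pi * u * -(N / (2 * Real.pi)) = -(N * u) by field_simp,
      show 2 * Real.pi * u * (N / (2 * Real.pi)) = N * u by field_simp,
      integral_exp_mul_I_eq_sinc] at h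
    simp only [show ∀ w : ℝ, 2 * Real.pi * (w * u) = 2 * Real.pi * u * w from fun w => by ring]
    rw [h, Complex.real_smul]
    push_cast
    have h1 : (Real.pi : ℂ) ≠ 0 := by exact_mod_cast hpi.ne'
    have h2 : (u : ℂ) ≠ 0 := by exact_mod_cast hu
    field_simp

open FourierTransform in
theorem ofReal_dirichletOp_eq {N : ℝ} (hN : 0 < N) {g : ℝ → ℝ} (hg : Integrable g) (x : ℝ) :
    ((dirichletOp N g x : ℝ) : ℂ) = Real.pi *
      ∫ w in Ioc (-(N / (2 * Real.pi))) (N / (2 * Real.pi)),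
        Complex.exp (↑(2 * Real.pi * (w * x)) * Complex.I) * 𝓕 (fun y => (g y : ℂ)) w := by
  have hgc : Integrable fun y => (g y : ℂ) := hg.ofReal
  set S := Ioc (-(N / (2 * Real.pi))) (N / (2 * Real.pi)) with hS
  have hfint : Integrable (Function.uncurry fun (y w : ℝ) =>
      Complex.exp (↑(2 * Real.pi * (w * (x - y))) * Complex.I) * (g y : ℂ))
      (volume.prod (volume.restrict S)) := by
    have h1 : Integrable (fun z : ℝ × ℝ => (g z.1 : ℂ) * 1) (volume.prod (volume.restrict S)) :=
      hgc.mul_prod (integrable_const (1 : ℂ))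
    refine (h1.bdd_mul (c := 1) (f := fun z : ℝ × ℝ =>
      Complex.exp (↑(2 * Real.pi * (z.2 * (x - z.1))) * Complex.I))
      (Continuous.aestronglyMeasurable (by fun_prop)) (ae_of_all _ fun z => ?_)).congr
      (ae_of_all _ fun z => by simp [Function.uncurry])
    rw [Complex.norm_exp_ofReal_mul_I]
  rw [dirichletOp, ← integral_complex_ofReal]
  calc ∫ y, ((N * Real.sinc (N * (x - y)) * g y : ℝ) : ℂ)
      = ∫ y, Real.pi * ∫ w in S,
          Complex.exp (↑(2 * Real.pi * (w * (x - y))) * Complex.I) * (g y : ℂ) := by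
        congr with y
        rw [Complex.ofReal_mul, ofReal_mul_sinc_eq_integral hN, integral_mul_const, mul_assoc]
    _ = Real.pi * ∫ w in S, ∫ y,
          Complex.exp (↑(2 * Real.pi * (w * (x - y))) * Complex.I) * (g y : ℂ) := by
        rw [integral_const_mul, integral_integral_swap hfint]
    _ = _ := by
        congr with w
        rw [Real.fourier_eq', ← integral_const_mul]
        congr with y
        rw [smul_eq_mul, ← mul_assoc (Complex.exp _) (Complex.exp _), ← Complex.exp_add]
        congr 2
        simp
        ring

open FourierTransform in
theorem exists_abs_dirichletOp_sub_le {g : ℝ → ℝ} (hg : ContDiff ℝ (⊤ : ℕ∞) g)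
    (hgs : HasCompactSupport g) :
    ∃ C, 0 ≤ C ∧ ∀ N, 0 < N → ∀ x, |dirichletOp N g x - Real.pi * g x| ≤ C / N := by
  have hpi := Real.pi_pos
  have hs : HasCompactSupport fun y => (g y : ℂ) := hgs.comp_left Complex.ofReal_zero
  let F : SchwartzMap ℝ ℂ := hs.toSchwartzMap (Complex.ofRealCLM.contDiff.comp hg)
  have hF : (F : ℝ → ℂ) = fun y => (g y : ℂ) := rfl
  have hgi : Integrable g := hg.continuous.integrable_of_hasCompactSupport hgs
  let G : SchwartzMap ℝ ℂ := 𝓕 F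
  have hG : (G : ℝ → ℂ) = 𝓕 (fun y => (g y : ℂ)) := rfl
  have hGi : Integrable G := G.integrable
  have hG1 : Integrable fun w => |w| * ‖G w‖ := by simpa using G.integrable_pow_mul volume 1
  refine ⟨2 * Real.pi ^ 2 * ∫ w, |w| * ‖G w‖, by positivity, fun N hN x => ?_⟩
  set S := Ioc (-(N / (2 * Real.pi))) (N / (2 * Real.pi)) with hS
  have hH : Integrable fun w : ℝ => Complex.exp (↑(2 * Real.pi * (w * x)) * Complex.I) * G w := by
    refine hGi.bdd_mul (c := 1) (Continuous.aestronglyMeasurable (by fun_prop))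
      (ae_of_all _ fun z => ?_)
    rw [Complex.norm_exp_ofReal_mul_I]
  have hinv : (g x : ℂ) = ∫ w, Complex.exp (↑(2 * Real.pi * (w * x)) * Complex.I) * G w := by
    have h := congrFun (Continuous.fourierInv_fourier_eq (f := fun y => (g y : ℂ)) F.continuous
      F.integrable hGi) x
    rw [← h, Real.fourierInv_eq']
    congr with w
    simp [hG, mul_comm]
  have hdiff : ((dirichletOp N g x - Real.pi * g x : ℝ) : ℂ) = -(Real.pi *
      ∫ w in Sᶜ, Complex.exp (↑(2 * Real.pi * (w * x)) * Complex.I) * G w) := by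
    rw [Complex.ofReal_sub, Complex.ofReal_mul, ofReal_dirichletOp_eq hN hgi, ← hG, hinv,
      ← integral_add_compl measurableSet_Ioc hH]
    ring
  have hbound : ‖∫ w in Sᶜ, Complex.exp (↑(2 * Real.pi * (w * x)) * Complex.I) * G w‖ ≤
      ∫ w, 2 * Real.pi / N * (|w| * ‖G w‖) := by
    refine (norm_integral_le_integral_norm _).trans (le_trans
      (setIntegral_mono_on hH.norm.integrableOn
      (hG1.const_mul _).integrableOn measurableSet_Ioc.compl fun w hw => ?_)
      (setIntegral_le_integral (hG1.const_mul _) (ae_of_all _ fun w => by positivity)))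
    rw [norm_mul, Complex.norm_exp_ofReal_mul_I, one_mul, ← mul_assoc]
    refine le_mul_of_one_le_left (norm_nonneg _) ?_
    have hw' : N / (2 * Real.pi) ≤ |w| := by
      by_contra! hlt
      exact hw ⟨(abs_lt.1 hlt).1, (abs_lt.1 hlt).2.le⟩
    calc (1 : ℝ) = 2 * Real.pi / N * (N / (2 * Real.pi)) := by field_simp
      _ ≤ _ := by gcongr
  rw [← Real.norm_eq_abs, ← Complex.norm_real, hdiff, norm_neg, norm_mul, Complex.norm_real,
    Real.norm_of_nonneg hpi.le]
  refine (mul_le_mul_of_nonneg_left hbound hpi.le).trans_eq ?_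
  rw [integral_const_mul]
  ring

/-- The truncation of a function in space and in size. -/
noncomputable def truncation (f : ℝ → ℝ) (M : ℝ) : ℝ → ℝ :=
  indicator {x | |f x| ≤ M ∧ |x| ≤ M} f

theorem measurableSet_truncation {f : ℝ → ℝ} (hf : Measurable f) (M : ℝ) :
    MeasurableSet {x | |f x| ≤ M ∧ |x| ≤ M} :=
  (measurableSet_le hf.abs measurable_const).inter
    (measurableSet_le measurable_id.abs measurable_const)

theorem abs_truncation_le {f : ℝ → ℝ} {M : ℝ} (hM : 0 ≤ M) (x : ℝ) : |truncation f M x| ≤ M := by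
  rw [truncation, indicator_apply]
  split_ifs with hx
  · exact hx.1
  · simpa using hM

theorem integrable_truncation {f : ℝ → ℝ} (hm : Measurable f) (M : ℝ) :
    Integrable (truncation f M) := by
  rw [truncation, integrable_indicator_iff (measurableSet_truncation hm M)]
  refine Measure.integrableOn_of_bounded (M := M) (ne_top_of_le_ne_top (b := volume (Icc (-M) M))
    (by simp) (measure_mono fun x hx => abs_le.1 hx.2)) hm.aestronglyMeasurable
    ((ae_restrict_mem (measurableSet_truncation hm M)).mono fun x hx => hx.1)

namespace IsEvenYoung

variable {φ : ℝ → ℝ}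

theorem measurable_ofReal_comp (h : IsEvenYoung φ) {f : ℝ → ℝ} (hf : Measurable f) :
    Measurable fun x => ENNReal.ofReal (φ (f x)) :=
  (h.continuous.measurable.comp hf).ennreal_ofReal

theorem map_le_div_mul (h : IsEvenYoung φ) {t L : ℝ} (hL : 0 < L) (ht : |t| ≤ L) :
    φ t ≤ φ L / L * |t| := by
  have := h.map_mul_le (k := |t| / L) (by positivity) ((div_le_one hL).2 ht) L
  rw [div_mul_cancel₀ _ hL.ne', h.map_abs] at this
  exact this.trans_eq (by ring)

theorem exists_truncation (h : IsEvenYoung φ) {f : ℝ → ℝ} (hm : Measurable f)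
    (hf : ∫⁻ x, ENNReal.ofReal (φ (f x)) ≠ ⊤) {ε : ENNReal} (hε : ε ≠ 0) :
    ∃ M, 0 < M ∧ ∫⁻ x, ENNReal.ofReal (φ (f x - truncation f M x)) ≤ ε := by
  have hlim : Tendsto (fun k : ℕ => ∫⁻ x, ENNReal.ofReal (φ (f x - truncation f k x))) atTop
      (nhds (∫⁻ _ : ℝ, 0)) := by
    refine tendsto_lintegral_of_dominated_convergence (fun x => ENNReal.ofReal (φ (f x)))
      (fun k => h.measurable_ofReal_comp (hm.sub (hm.indicator (measurableSet_truncation hm k))))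
      (fun k => ae_of_all _ fun x => ENNReal.ofReal_le_ofReal (h.mono ?_)) hf
      (ae_of_all _ fun x => ?_)
    · rw [truncation, indicator_apply]
      split_ifs <;> simp
    · refine tendsto_const_nhds.congr' ?_
      filter_upwards [eventually_ge_atTop ⌈max |f x| |x|⌉₊] with k hk
      have hk' := Nat.ceil_le.1 hk
      have hx : x ∈ {x | |f x| ≤ k ∧ |x| ≤ k} :=
        ⟨(le_max_left _ _).trans hk', (le_max_right _ _).trans hk'⟩
      rw [truncation, indicator_of_mem hx]
      simp [h.zero]
  rw [lintegral_zero] at hlim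
  obtain ⟨k, hk, hk0⟩ := ((hlim.eventually (ge_mem_nhds hε.bot_lt)).and
    (eventually_gt_atTop 0)).exists
  exact ⟨k, by exact_mod_cast hk0, hk⟩

theorem exists_contDiff_lintegral_sub_le (h : IsEvenYoung φ) {f : ℝ → ℝ} (hf : Integrable f)
    {M : ℝ} (hM : 0 < M) (hfM : ∀ x, |f x| ≤ M) {ε : ℝ} (hε : 0 < ε) :
    ∃ g : ℝ → ℝ, ContDiff ℝ (⊤ : ℕ∞) g ∧ HasCompactSupport g ∧
      ∫⁻ x, ENNReal.ofReal (φ (f x - g x)) ≤ ENNReal.ofReal ε := by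
  set L := 2 * M + 1 with hL
  have hL0 : 0 < L := by linarith
  set C := φ L / L with hC
  have hC0 : 0 ≤ C := div_nonneg (h.nonneg _) hL0.le
  set δ := ε / (2 * (C + 1)) with hδ
  have hδ0 : 0 < δ := by positivity
  obtain ⟨g₀, hs₀, hle₀, hc₀, -⟩ :=
    (memLp_one_iff_integrable.2 hf).exists_hasCompactSupport_eLpNorm_sub_le
      ENNReal.one_ne_top (ε := ENNReal.ofReal δ) (by simpa using hδ0)
  set g₁ : ℝ → ℝ := fun x => max (-M) (min M (g₀ x)) with hg₁
  have hs₁ : HasCompactSupport g₁ :=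
    hs₀.comp_left (g := fun t => max (-M) (min M t)) (by simp [hM.le])
  have hc₁ : Continuous g₁ := by fun_prop
  have hb₁ : ∀ x, |g₁ x| ≤ M := fun x =>
    abs_le.2 ⟨le_max_left _ _, max_le (by linarith) (min_le_left _ _)⟩
  have hle₁ : ∀ x, |f x - g₁ x| ≤ |f x - g₀ x| := fun x => by
    have h1 := abs_le.1 (hfM x)
    simp only [hg₁]
    rcases le_total M (g₀ x) with h2 | h2
    · rw [min_eq_left h2, max_eq_right (by linarith), abs_of_nonpos (by linarith),
        abs_of_nonpos (by linarith)]
      linarith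
    · rw [min_eq_right h2]
      rcases le_total (-M) (g₀ x) with h3 | h3
      · rw [max_eq_right h3]
      · rw [max_eq_left h3, abs_of_nonneg (by linarith), abs_of_nonneg (by linarith)]
        linarith
  set K := tsupport g₁ with hK
  have hKtop : volume K ≠ ⊤ := hs₁.isCompact.measure_ne_top
  set τ := min 1 (δ / (volume.real K + 1)) with hτ
  have hτ0 : 0 < τ := lt_min one_pos (by positivity)
  obtain ⟨g, hg, happ, hsupp⟩ := hc₁.exists_contDiff_approx ⊤ (ε := fun _ => τ) continuous_const
    fun _ => hτ0
  have hgK : ∀ x, x ∉ K → g x = 0 ∧ g₁ x = 0 := fun x hx => by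
    have h1 : g₁ x = 0 := image_eq_zero_of_notMem_tsupport hx
    exact ⟨by_contra fun h2 => hsupp h2 h1, h1⟩
  refine ⟨g, hg, hs₁.mono hsupp, ?_⟩
  have hpt : ∀ x, φ (f x - g x) ≤ C * (|f x - g₀ x| + K.indicator (fun _ => τ) x) := fun x => by
    have hd : |g₁ x - g x| ≤ K.indicator (fun _ => τ) x := by
      by_cases hx : x ∈ K
      · rw [indicator_of_mem hx, abs_sub_comm, ← Real.dist_eq]
        exact (happ x).le
      · simp [indicator_of_notMem hx, hgK x hx]
    have hτ1 : K.indicator (fun _ => τ) x ≤ 1 :=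
      (indicator_le_self' (fun _ _ => hτ0.le) x).trans (min_le_left _ _)
    have htri := abs_sub_le (f x) (g₁ x) (g x)
    have hfg₁ := (abs_sub (f x) (g₁ x)).trans (add_le_add (hfM x) (hb₁ x))
    refine (h.map_le_div_mul hL0 (by linarith)).trans ?_
    exact mul_le_mul_of_nonneg_left (by linarith [hle₁ x]) hC0
  calc ∫⁻ x, ENNReal.ofReal (φ (f x - g x))
      ≤ ∫⁻ x, ENNReal.ofReal C * (‖f x - g₀ x‖ₑ + K.indicator (fun _ => ENNReal.ofReal τ) x) := by
        refine MeasureTheory.lintegral_mono fun x => ?_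
        refine (ENNReal.ofReal_le_ofReal (hpt x)).trans_eq ?_
        have hi : 0 ≤ K.indicator (fun _ => τ) x := indicator_nonneg (fun _ _ => hτ0.le) x
        rw [ENNReal.ofReal_mul hC0, ENNReal.ofReal_add (abs_nonneg _) hi, Real.enorm_eq_ofReal_abs]
        by_cases hx : x ∈ K <;> simp [hx]
    _ = ENNReal.ofReal C * (eLpNorm (f - g₀) 1 volume + ENNReal.ofReal τ * volume K) := by
        rw [lintegral_const_mul' _ _ ENNReal.ofReal_ne_top, lintegral_add_right _
          (measurable_const.indicator (isClosed_tsupport _).measurableSet),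
          lintegral_indicator_const (isClosed_tsupport _).measurableSet,
          eLpNorm_one_eq_lintegral_enorm]
        rfl
    _ ≤ ENNReal.ofReal C * (ENNReal.ofReal δ + ENNReal.ofReal δ) := by
        refine mul_le_mul_right (add_le_add hle₀ ?_) _
        rw [← ENNReal.ofReal_toReal hKtop, ← ENNReal.ofReal_mul hτ0.le]
        refine ENNReal.ofReal_le_ofReal ?_
        calc τ * (volume K).toReal ≤ δ / (volume.real K + 1) * (volume.real K + 1) :=
              mul_le_mul (min_le_right _ _) (by simp [Measure.real]) ENNReal.toReal_nonneg
                (by positivity)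
          _ = δ := div_mul_cancel₀ _ (by positivity)
    _ ≤ ENNReal.ofReal ε := by
        rw [← ENNReal.ofReal_add hδ0.le hδ0.le, ← ENNReal.ofReal_mul hC0]
        refine ENNReal.ofReal_le_ofReal ?_
        calc C * (δ + δ) ≤ (C + 1) * (δ + δ) := by gcongr; linarith
          _ = ε := by rw [hδ]; field_simp; norm_num

end IsEvenYoung

/-- Smooth compactly supported functions are dense in the modular topology. -/
theorem IsRegularYoung.exists_contDiff_lintegral_sub_le {φ : ℝ → ℝ} {D c : ℝ}
    (h : IsRegularYoung φ D c) {f : ℝ → ℝ} (hm : Measurable f)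
    (hf : ∫⁻ x, ENNReal.ofReal (φ (f x)) ≠ ⊤) {ε : ℝ} (hε : 0 < ε) :
    ∃ g : ℝ → ℝ, ContDiff ℝ (⊤ : ℕ∞) g ∧ HasCompactSupport g ∧
      ∫⁻ x, ENNReal.ofReal (φ (f x - g x)) ≤ ENNReal.ofReal ε := by
  have hD : 0 < D := one_pos.trans_le h.one_le
  set δ := ε / (2 * D) with hδ
  have hδ0 : 0 < δ := by positivity
  obtain ⟨M, hM, hfM⟩ := h.exists_truncation hm hf (ε := ENNReal.ofReal δ) (by simpa using hδ0)
  obtain ⟨g, hg, hgs, hle⟩ := h.toIsEvenYoung.exists_contDiff_lintegral_sub_le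
    (integrable_truncation hm M) hM (abs_truncation_le hM.le) hδ0
  refine ⟨g, hg, hgs, ?_⟩
  calc ∫⁻ x, ENNReal.ofReal (φ (f x - g x)) = ∫⁻ x, ENNReal.ofReal (φ
        ((f x - truncation f M x) + (truncation f M x - g x))) := by simp
    _ ≤ ENNReal.ofReal D * (ENNReal.ofReal δ + ENNReal.ofReal δ) :=
        (h.lintegral_add_le (hm.sub (hm.indicator (measurableSet_truncation hm M)))).trans
          (mul_le_mul_right (add_le_add hfM hle) _)
    _ = ENNReal.ofReal ε := by
        rw [← ENNReal.ofReal_add hδ0.le hδ0.le, ← ENNReal.ofReal_mul hD.le, hδ]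
        congr 1
        field_simp
        norm_num

theorem dirichletOp_sub (N : ℝ) {f g : ℝ → ℝ} (hf : Integrable f) (hg : Integrable g) (x : ℝ) :
    dirichletOp N (fun y => f y - g y) x = dirichletOp N f x - dirichletOp N g x := by
  rw [dirichletOp, dirichletOp, dirichletOp, ← integral_sub (integrable_dirichletOp N hf x)
    (integrable_dirichletOp N hg x)]
  simp only [mul_sub]

theorem measurable_hermitePartialSum (n : ℕ) (f : ℝ → ℝ) : Measurable (hermitePartialSum n f) :=
  (continuous_finsetSum _ fun k _ => continuous_const.mul (continuous_hermiteFun k)).measurable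

theorem IsEvenYoung.integrable_indicator {φ : ℝ → ℝ} (h : IsEvenYoung φ) (h1 : 0 < φ 1)
    {f : ℝ → ℝ} (hm : Measurable f) (hf : ∫⁻ x, ENNReal.ofReal (φ (f x)) ≠ ⊤) {s : Set ℝ}
    (hs : MeasurableSet s) (hs' : volume s ≠ ⊤) : Integrable (indicator s f) := by
  rw [integrable_indicator_iff hs]
  have hφ : Integrable fun x => φ (f x) :=
    (lintegral_ofReal_ne_top_iff_integrable (h.continuous.measurable.comp hm).aestronglyMeasurable
      (ae_of_all _ fun x => h.nonneg _)).1 hf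
  refine ((integrableOn_const (C := (1 : ℝ)) hs').add
    (hφ.integrableOn.const_mul (φ 1)⁻¹)).mono' hm.aestronglyMeasurable (ae_of_all _ fun x => ?_)
  rw [Real.norm_eq_abs]
  have h0 := h.nonneg (f x)
  rcases le_total |f x| 1 with hx | hx
  · exact hx.trans (le_add_of_nonneg_right (by positivity))
  · have hL : 0 < |f x| := by linarith
    have h2 := h.map_le_div_mul (t := 1) hL (by simpa using hx)
    rw [h.map_abs, abs_one, mul_one, le_div_iff₀ hL] at h2
    refine le_trans ?_ (le_add_of_nonneg_left zero_le_one)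
    change |f x| ≤ (φ 1)⁻¹ * φ (f x)
    rw [inv_mul_eq_div, le_div_iff₀ h1]
    linarith

section Convergence

variable {T : ℕ → ℝ}

theorem tendsto_div_hermiteFreq (hT0 : ∀ n, 0 < T n)
    (hT : Tendsto (fun n : ℕ => T n / (n : ℝ) ^ ((1 : ℝ) / 34)) atTop (nhds 0)) :
    Tendsto (fun n => T n / hermiteFreq n) atTop (nhds 0) := by
  refine squeeze_zero' (Eventually.of_forall fun n => (div_pos (hT0 n) (hermiteFreq_pos n)).le) ?_
    tendsto_natCast_rpow.inv_tendsto_atTop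
  filter_upwards [eventually_le_rpow hT, tendsto_natCast_rpow.eventually_ge_atTop 1] with n hn hb
  have hN := pow_le_hermiteFreq n
  simp only [Pi.inv_apply]
  set b := (n : ℝ) ^ ((1 : ℝ) / 34)
  have hb0 : 0 < b := by linarith
  calc T n / hermiteFreq n ≤ b / b ^ 2 := by
        gcongr
        exact (pow_le_pow_right₀ hb (by norm_num)).trans hN
    _ = b⁻¹ := by field_simp

theorem tendsto_hermiteFreq : Tendsto hermiteFreq atTop atTop :=
  Real.tendsto_sqrt_atTop.comp <| Tendsto.const_mul_atTop two_pos <|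
    tendsto_atTop_add_const_right _ _ tendsto_natCast_atTop_atTop

/-- Modular convergence of Dirichlet integrals of a test function on slowly growing intervals. -/
theorem IsRegularYoung.tendsto_lintegral_dirichletOp_sub {φ : ℝ → ℝ} {D c : ℝ}
    (h : IsRegularYoung φ D c) (hT0 : ∀ n, 0 < T n)
    (hT : Tendsto (fun n : ℕ => T n / (n : ℝ) ^ ((1 : ℝ) / 34)) atTop (nhds 0))
    {g : ℝ → ℝ} (hg : ContDiff ℝ (⊤ : ℕ∞) g) (hgs : HasCompactSupport g)
    (hφg : ∫⁻ x, ENNReal.ofReal (φ (g x)) ≠ ⊤) :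
    Tendsto (fun n => ∫⁻ x, ENNReal.ofReal (φ (indicator (Ioo (-(T n)) (T n)) (fun x =>
      hermiteAmplitude n * dirichletOp (hermiteFreq n) g x - g x) x))) atTop (nhds 0) := by
  have hD : 0 ≤ D := zero_le_one.trans h.one_le
  have hpi := Real.pi_pos
  obtain ⟨C, hC0, hC⟩ := exists_abs_dirichletOp_sub_le hg hgs
  set α : ℕ → ℝ := fun n => |hermiteAmplitude n * Real.pi - 1| with hα
  have hαlim : Tendsto α atTop (nhds 0) := by
    have := ((tendsto_hermiteAmplitude.mul_const Real.pi).sub_const 1).abs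
    simpa [hpi.ne'] using this
  have hlim : Tendsto (fun n => ENNReal.ofReal D *
      (ENNReal.ofReal (2 * φ C * (T n / hermiteFreq n)) +
      ENNReal.ofReal (α n) * ∫⁻ x, ENNReal.ofReal (φ (g x)))) atTop (nhds 0) := by
    have h1 : Tendsto (fun n => ENNReal.ofReal (2 * φ C * (T n / hermiteFreq n))) atTop
        (nhds 0) := by
      simpa using ENNReal.tendsto_ofReal ((tendsto_div_hermiteFreq hT0 hT).const_mul (2 * φ C))
    have h2 : Tendsto (fun n => ENNReal.ofReal (α n) * ∫⁻ x, ENNReal.ofReal (φ (g x))) atTop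
        (nhds 0) := by
      simpa using ENNReal.Tendsto.mul_const (ENNReal.tendsto_ofReal hαlim) (Or.inr hφg)
    simpa using ENNReal.Tendsto.const_mul (h1.add h2) (Or.inr ENNReal.ofReal_ne_top)
  refine tendsto_of_tendsto_of_tendsto_of_le_of_le' tendsto_const_nhds hlim
    (Eventually.of_forall fun n => zero_le) ?_
  have hpi1 : Real.pi⁻¹ < 1 := inv_lt_one_of_one_lt₀ (by linarith [Real.pi_gt_three])
  filter_upwards [tendsto_hermiteAmplitude.eventually (gt_mem_nhds hpi1),
    hαlim.eventually (gt_mem_nhds one_pos), tendsto_hermiteFreq.eventually_ge_atTop 1]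
    with n hA hα1 hN1
  have hA0 := hermiteAmplitude_nonneg n
  have hN := hermiteFreq_pos n
  set N := hermiteFreq n
  set S := Ioo (-(T n)) (T n) with hS
  have hpt : ∀ x, |indicator S (fun x => hermiteAmplitude n * dirichletOp N g x - g x) x| ≤
      |indicator S (fun _ => C / N) x + α n * (|g x|)| := fun x => by
    have hα0 : 0 ≤ α n := abs_nonneg _
    by_cases hx : x ∈ S
    · rw [indicator_of_mem hx, indicator_of_mem hx, abs_of_nonneg (a := C / N + _) (by positivity)]
      calc |hermiteAmplitude n * dirichletOp N g x - g x|
          = |hermiteAmplitude n * (dirichletOp N g x - Real.pi * g x) +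
              (hermiteAmplitude n * Real.pi - 1) * g x| := by ring_nf
        _ ≤ hermiteAmplitude n * |dirichletOp N g x - Real.pi * g x| + α n * |g x| := by
            refine (abs_add_le _ _).trans_eq ?_
            rw [abs_mul, abs_mul, abs_of_nonneg hA0]
        _ ≤ 1 * (C / N) + α n * |g x| := by
            gcongr
            exact hC N hN x
        _ = _ := by rw [one_mul]
    · rw [indicator_of_notMem hx, abs_zero]
      exact abs_nonneg _
  refine (h.lintegral_mono hpt).trans ((h.lintegral_add_le
    (measurable_const.indicator measurableSet_Ioo)).trans (mul_le_mul_right (add_le_add ?_ ?_) _))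
  · calc ∫⁻ x, ENNReal.ofReal (φ (indicator S (fun _ => C / N) x))
        ≤ ∫⁻ x, indicator S (fun _ => ENNReal.ofReal (φ C / N)) x := by
          refine MeasureTheory.lintegral_mono fun x => ?_
          by_cases hx : x ∈ S
          · simp only [indicator_of_mem hx]
            refine ENNReal.ofReal_le_ofReal ?_
            have := h.map_mul_le (k := N⁻¹) (by positivity) (inv_le_one_of_one_le₀ hN1) C
            rwa [inv_mul_eq_div, inv_mul_eq_div] at this
          · simp [indicator_of_notMem hx, h.zero]
      _ = ENNReal.ofReal (2 * φ C * (T n / N)) := by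
          rw [lintegral_indicator_const measurableSet_Ioo, Real.volume_Ioo,
            ← ENNReal.ofReal_mul (div_nonneg (h.nonneg _) hN.le)]
          congr 1
          ring
  · rw [← lintegral_const_mul' _ _ ENNReal.ofReal_ne_top]
    refine MeasureTheory.lintegral_mono fun x => ?_
    rw [← ENNReal.ofReal_mul (abs_nonneg _)]
    refine ENNReal.ofReal_le_ofReal ?_
    rw [← h.map_abs (g x)]
    exact h.map_mul_le (abs_nonneg _) hα1.le _

theorem IsRegularYoung.tendsto_lintegral_hermitePartialSum {φ : ℝ → ℝ} {D c : ℝ}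
    (h : IsRegularYoung φ D c) (h1 : 0 < φ 1) (hT0 : ∀ n, 0 < T n)
    (hTinf : Tendsto T atTop atTop)
    (hT : Tendsto (fun n : ℕ => T n / (n : ℝ) ^ ((1 : ℝ) / 34)) atTop (nhds 0))
    {f : ℝ → ℝ} (hm : Measurable f) (hf : ∫⁻ x, ENNReal.ofReal (φ (f x)) ≠ ⊤) :
    Tendsto (fun n => ∫⁻ x, ENNReal.ofReal (φ (indicator (Ioo (-(T n)) (T n))
      (hermitePartialSum n (indicator (Ioo (-(T n)) (T n)) f)) x - f x))) atTop (nhds 0) := by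
  have hD : 0 < D := one_pos.trans_le h.one_le
  obtain ⟨B, hB0, hB⟩ := h.exists_dirichletOp_bound
  refine ENNReal.tendsto_nhds_zero.2 fun ε hε => ?_
  obtain ⟨δ, hδ0, hδε⟩ : ∃ δ : ℝ, 0 < δ ∧ ENNReal.ofReal δ < ε := by
    obtain ⟨r, hr0, hr⟩ := ENNReal.lt_iff_exists_nnreal_btwn.1 hε
    exact ⟨r, by exact_mod_cast hr0, by simpa using hr⟩
  set τ := δ / (D * (D * (B + D))) with hτ
  have hτ0 : 0 < τ := by positivity
  obtain ⟨g, hg, hgs, hfg⟩ := h.exists_contDiff_lintegral_sub_le hm hf hτ0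
  have hgf : ∫⁻ x, ENNReal.ofReal (φ (g x - f x)) ≤ ENNReal.ofReal τ :=
    (h.lintegral_mono fun x => (abs_sub_comm _ _).le).trans hfg
  have hgm : Measurable g := hg.continuous.measurable
  have hgi : Integrable g := hg.continuous.integrable_of_hasCompactSupport hgs
  have hφg : ∫⁻ x, ENNReal.ofReal (φ (g x)) ≠ ⊤ := by
    have := h.lintegral_add_le (f := f) (g := fun x => g x - f x) hm
    simp only [add_sub_cancel] at this
    refine ne_top_of_le_ne_top (ENNReal.mul_ne_top ENNReal.ofReal_ne_top
      (ENNReal.add_ne_top.2 ⟨hf, ne_top_of_le_ne_top ENNReal.ofReal_ne_top hgf⟩)) this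
  set J : ℕ → ENNReal := fun n => ∫⁻ x, ENNReal.ofReal (φ (indicator (Ioo (-(T n)) (T n)) (fun x =>
      hermiteAmplitude n * dirichletOp (hermiteFreq n) g x - g x) x)) with hJ
  have hJlim : Tendsto J atTop (nhds 0) := h.tendsto_lintegral_dirichletOp_sub hT0 hT hg hgs hφg
  have hRlim := tendsto_hermiteRemainder hT0 hT
  have hU : Tendsto (fun n => ENNReal.ofReal D *
      (ENNReal.ofReal (hermiteRemainder n (T n)) * (∫⁻ x, ENNReal.ofReal (φ (f x))) +
        ENNReal.ofReal D * (ENNReal.ofReal B * ENNReal.ofReal τ +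
          ENNReal.ofReal D * (J n + ENNReal.ofReal τ)))) atTop (nhds (ENNReal.ofReal δ)) := by
    have h2 : Tendsto (fun n => ENNReal.ofReal (hermiteRemainder n (T n)) *
        ∫⁻ x, ENNReal.ofReal (φ (f x))) atTop (nhds 0) := by
      simpa using ENNReal.Tendsto.mul_const (ENNReal.tendsto_ofReal hRlim) (Or.inr hf)
    have h3 := ENNReal.Tendsto.const_mul (a := ENNReal.ofReal D) (h2.add
      (ENNReal.Tendsto.const_mul (a := ENNReal.ofReal D) (Tendsto.const_add
        (ENNReal.ofReal B * ENNReal.ofReal τ) (ENNReal.Tendsto.const_mul (a := ENNReal.ofReal D)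
          (hJlim.add_const (ENNReal.ofReal τ)) (Or.inr ENNReal.ofReal_ne_top)))
        (Or.inr ENNReal.ofReal_ne_top))) (Or.inr ENNReal.ofReal_ne_top)
    convert h3 using 2
    rw [zero_add, zero_add, ← ENNReal.ofReal_mul hB0, ← ENNReal.ofReal_mul hD.le,
      ← ENNReal.ofReal_add (by positivity) (by positivity), ← ENNReal.ofReal_mul hD.le,
      ← ENNReal.ofReal_mul hD.le, hτ]
    congr 1
    field_simp
  obtain ⟨r, hr⟩ := hgs.isCompact.isBounded.subset_closedBall 0
  have hpi1 : Real.pi⁻¹ < 1 := inv_lt_one_of_one_lt₀ (by linarith [Real.pi_gt_three])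
  filter_upwards [hU.eventually (gt_mem_nhds hδε), hRlim.eventually (gt_mem_nhds one_pos),
    eventually_two_mul_le_hermiteFreq hT0 hT, hTinf.eventually_gt_atTop r,
    tendsto_hermiteAmplitude.eventually (gt_mem_nhds hpi1)] with n hUn hR hTN hTr hA
  refine le_trans ?_ hUn.le
  have hA0 := hermiteAmplitude_nonneg n
  have hN := hermiteFreq_pos n
  set N := hermiteFreq n
  set S := Ioo (-(T n)) (T n) with hS
  set F := indicator S f with hF
  have hSm : MeasurableSet S := measurableSet_Ioo
  have hFm : Measurable F := hm.indicator hSm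
  have hFi : Integrable F := h.integrable_indicator h1 hm hf hSm (by simp [hS])
  have hST : ∀ y, T n < |y| → y ∉ S := fun y hy hyS => (abs_lt.2 hyS).not_gt hy
  have hFT : ∀ y, T n < |y| → F y = 0 := fun y hy => indicator_of_notMem (hST y hy) _
  have hgS : ∀ y, y ∉ S → g y = 0 := fun y hy => image_eq_zero_of_notMem_tsupport fun hy' =>
    hy (abs_lt.1 ((by simpa using hr hy' : |y| ≤ r).trans_lt hTr))
  have hFg : ∀ y, |F y - g y| ≤ |f y - g y| := fun y => by
    by_cases hy : y ∈ S
    · simp [hF, hy]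
    · simp [hF, hy, hgS y hy]
  have hsplit : ∀ x, indicator S (hermitePartialSum n F) x - f x =
      indicator S (fun x => hermitePartialSum n F x - hermiteAmplitude n * dirichletOp N F x) x +
        (indicator S (fun x => hermiteAmplitude n * dirichletOp N (fun y => F y - g y) x) x +
          (indicator S (fun x => hermiteAmplitude n * dirichletOp N g x - g x) x +
            (g x - f x))) := fun x => by
    by_cases hx : x ∈ S
    · simp only [indicator_of_mem hx, dirichletOp_sub N hFi hgi]
      ring
    · simp [indicator_of_notMem hx, hgS x hx]
  simp only [hsplit]
  have hm₁ : Measurable (indicator S fun x =>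
      hermitePartialSum n F x - hermiteAmplitude n * dirichletOp N F x) :=
    ((measurable_hermitePartialSum n F).sub
      ((measurable_dirichletOp N hFm).const_mul _)).indicator hSm
  have hm₂ : Measurable (indicator S fun x =>
      hermiteAmplitude n * dirichletOp N (fun y => F y - g y) x) :=
    ((measurable_dirichletOp N (hFm.sub hgm)).const_mul _).indicator hSm
  have hm₃ : Measurable (indicator S fun x => hermiteAmplitude n * dirichletOp N g x - g x) :=
    (((measurable_dirichletOp N hgm).const_mul _).sub hgm).indicator hSm
  refine (h.lintegral_add_le hm₁).trans (mul_le_mul_right (add_le_add ?_ <|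
    (h.lintegral_add_le hm₂).trans <| mul_le_mul_right (add_le_add ?_ <|
    (h.lintegral_add_le hm₃).trans <| mul_le_mul_right (add_le_add le_rfl hgf) _) _) _)
  · refine (h.lintegral_hermitePartialSum_sub_le n (hT0 n) hTN hR.le hFm hFi hFT).trans
      (mul_le_mul_right (h.lintegral_mono fun x => ?_) _)
    by_cases hx : x ∈ S <;> simp [hF, hx]
  · refine (h.lintegral_mono (g := dirichletOp N fun y => F y - g y) fun x => ?_).trans
      ((hB N (T n) _ hN (hFm.sub hgm) (hFi.sub hgi) fun y hy => ?_).trans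
        (mul_le_mul_right ((h.lintegral_mono hFg).trans hfg) _))
    · by_cases hx : x ∈ S
      · rw [indicator_of_mem hx, abs_mul, abs_of_nonneg hA0]
        exact mul_le_of_le_one_left (abs_nonneg _) hA.le
      · simp [indicator_of_notMem hx]
    · simp [hFT y hy, hgS y (hST y hy)]

end Convergence

theorem IsRegularYoung.map_two_pow_mul_le {φ : ℝ → ℝ} {D c : ℝ} (h : IsRegularYoung φ D c)
    (k : ℕ) (t : ℝ) : φ (2 ^ k * t) ≤ D ^ k * φ t := by
  have hD : 0 ≤ D := zero_le_one.trans h.one_le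
  induction k with
  | zero => simp
  | succ k ih =>
    calc φ (2 ^ (k + 1) * t) = φ (2 * (2 ^ k * t)) := by ring_nf
      _ ≤ D * φ (2 ^ k * t) := h.map_two_mul_le _
      _ ≤ D * (D ^ k * φ t) := by gcongr
      _ = D ^ (k + 1) * φ t := by ring

namespace YoungFunction

variable (A : YoungFunction)

theorem toFun_mul_le {k t : ℝ} (hk : 0 ≤ k) (hk1 : k ≤ 1) (ht : 0 ≤ t) :
    A.toFun (k * t) ≤ ENNReal.ofReal k * A.toFun t := by
  simpa [A.zero'] using A.convex' ht le_rfl hk (sub_nonneg.2 hk1) (add_sub_cancel k 1)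

theorem toFun_mono {s t : ℝ} (hs : 0 ≤ s) (hst : s ≤ t) : A.toFun s ≤ A.toFun t := by
  rcases hs.eq_or_lt with rfl | hs
  · simp [A.zero']
  · have ht := hs.trans_le hst
    have h := A.toFun_mul_le (k := s / t) (by positivity) ((div_le_one ht).2 hst) ht.le
    rw [div_mul_cancel₀ _ ht.ne'] at h
    exact h.trans (mul_le_of_le_one_left' (ENNReal.ofReal_le_one.2 ((div_le_one ht).2 hst)))

theorem exists_toFun_ne_zero : ∃ t, 0 < t ∧ A.toFun t ≠ 0 := by
  obtain ⟨s, t, hs, ht, hst⟩ := A.nonconstant'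
  by_contra! h
  exact hst ((h s hs).trans (h t ht).symm)

/-- The even real-valued function attached to a finite Young function. -/
noncomputable def evenReal (t : ℝ) : ℝ := (A.toFun |t|).toReal

variable {A}

theorem ofReal_evenReal (hA : ∀ t, 0 ≤ t → A.toFun t < ⊤) (t : ℝ) :
    ENNReal.ofReal (A.evenReal t) = A.toFun |t| :=
  ENNReal.ofReal_toReal (hA _ (abs_nonneg t)).ne

theorem isEvenYoung_evenReal (hA : ∀ t, 0 ≤ t → A.toFun t < ⊤) : IsEvenYoung A.evenReal where
  even t := by simp [evenReal]
  zero := by simp [evenReal, A.zero']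
  convex := by
    refine ⟨convex_univ, fun x _ y _ a b ha hb hab => ?_⟩
    have hle : A.toFun |a * x + b * y| ≤
        ENNReal.ofReal a * A.toFun |x| + ENNReal.ofReal b * A.toFun |y| := by
      refine (A.toFun_mono (abs_nonneg _) ?_).trans
        (A.convex' (abs_nonneg x) (abs_nonneg y) ha hb hab)
      refine (abs_add_le _ _).trans_eq ?_
      rw [abs_mul, abs_mul, abs_of_nonneg ha, abs_of_nonneg hb]
    simp only [smul_eq_mul]
    have h1 : 0 ≤ A.evenReal x := ENNReal.toReal_nonneg
    have h2 : 0 ≤ A.evenReal y := ENNReal.toReal_nonneg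
    rw [← ENNReal.ofReal_le_ofReal_iff (by positivity), ENNReal.ofReal_add (by positivity)
      (by positivity), ENNReal.ofReal_mul ha, ENNReal.ofReal_mul hb, ofReal_evenReal hA,
      ofReal_evenReal hA, ofReal_evenReal hA]
    exact hle

theorem one_lt_of_nabla₂ (hA : ∀ t, 0 ≤ t → A.toFun t < ⊤) {c : ℝ} (hc : 0 < c)
    (h : ∀ t, 0 < t → A.toFun t ≤ ENNReal.ofReal (1 / (2 * c)) * A.toFun (c * t)) : 1 < c := by
  by_contra! hc1
  obtain ⟨t, ht, ht0⟩ := A.exists_toFun_ne_zero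
  have h1 := (h t ht).trans (mul_le_mul_right (A.toFun_mul_le hc.le hc1 ht.le) _)
  rw [← mul_assoc, ← ENNReal.ofReal_mul (by positivity),
    show 1 / (2 * c) * c = 1 / 2 by field_simp] at h1
  have h2 := ENNReal.toReal_mono (ENNReal.mul_ne_top ENNReal.ofReal_ne_top (hA t ht.le).ne) h1
  rw [ENNReal.toReal_mul, ENNReal.toReal_ofReal (by norm_num)] at h2
  have h3 := ENNReal.toReal_pos ht0 (hA t ht.le).ne
  linarith

theorem isRegularYoung_evenReal (hA : ∀ t, 0 ≤ t → A.toFun t < ⊤) {C c : ℝ} (hc : 0 < c)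
    (hC : ∀ t, 0 < t → A.toFun (2 * t) ≤ ENNReal.ofReal C * A.toFun t)
    (h : ∀ t, 0 < t → A.toFun t ≤ ENNReal.ofReal (1 / (2 * c)) * A.toFun (c * t)) :
    IsRegularYoung A.evenReal (max C 1) c where
  toIsEvenYoung := isEvenYoung_evenReal hA
  one_le := le_max_right _ _
  one_lt := one_lt_of_nabla₂ hA hc h
  map_two_mul_le t := by
    have h0 : 0 ≤ A.evenReal t := ENNReal.toReal_nonneg
    have hC0 : 0 ≤ max C 1 := zero_le_one.trans (le_max_right _ _)
    rcases eq_or_ne t 0 with rfl | ht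
    · simp [evenReal, A.zero']
    · rw [← ENNReal.ofReal_le_ofReal_iff (by positivity), ENNReal.ofReal_mul hC0,
        ofReal_evenReal hA, ofReal_evenReal hA, abs_mul, abs_two]
      exact (hC _ (abs_pos.2 ht)).trans (mul_le_mul_left
        (ENNReal.ofReal_le_ofReal (le_max_left _ _)) _)
  two_mul_le_map t := by
    have h0 : 0 ≤ A.evenReal (c * t) := ENNReal.toReal_nonneg
    rcases eq_or_ne t 0 with rfl | ht
    · simp [evenReal, A.zero']
    · rw [← le_div_iff₀' (by positivity), ← one_div_mul_eq_div,
        ← ENNReal.ofReal_le_ofReal_iff (by positivity), ENNReal.ofReal_mul (by positivity),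
        ofReal_evenReal hA, ofReal_evenReal hA, abs_mul, abs_of_pos hc]
      exact h _ (abs_pos.2 ht)

end YoungFunction

theorem IsRegularYoung.pos_of_ne_zero {φ : ℝ → ℝ} {D c : ℝ} (h : IsRegularYoung φ D c) {s t : ℝ}
    (hs : φ s ≠ 0) (ht : t ≠ 0) : 0 < φ t := by
  obtain ⟨k, hk⟩ := pow_unbounded_of_one_lt (|s| / |t|) (one_lt_two (α := ℝ))
  have ht' := abs_pos.2 ht
  have h1 : φ s ≤ φ (2 ^ k * t) := h.mono (by
    rw [abs_mul, abs_of_pos (by positivity : (0 : ℝ) < 2 ^ k), ← div_le_iff₀ ht']; exact hk.le)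
  have h2 := h1.trans (h.map_two_pow_mul_le k t)
  refine (h.nonneg t).lt_of_ne fun h0 => hs (le_antisymm ?_ (h.nonneg s))
  simpa [← h0] using h2

theorem IsRegularYoung.lintegral_ne_top {φ : ℝ → ℝ} {D c : ℝ} (h : IsRegularYoung φ D c)
    {f : ℝ → ℝ} {a : ℝ} (ha : 0 < a) (hf : ∫⁻ x, ENNReal.ofReal (φ (a * f x)) ≠ ⊤) :
    ∫⁻ x, ENNReal.ofReal (φ (f x)) ≠ ⊤ := by
  have hD : 0 ≤ D := zero_le_one.trans h.one_le
  obtain ⟨k, hk⟩ := pow_unbounded_of_one_lt a⁻¹ (one_lt_two (α := ℝ))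
  refine ne_top_of_le_ne_top (ENNReal.mul_ne_top (ENNReal.ofReal_ne_top (r := D ^ k)) hf) ?_
  rw [← lintegral_const_mul' _ _ ENNReal.ofReal_ne_top]
  refine MeasureTheory.lintegral_mono fun x => ?_
  rw [← ENNReal.ofReal_mul (by positivity)]
  refine ENNReal.ofReal_le_ofReal ((h.mono ?_).trans (h.map_two_pow_mul_le k _))
  rw [← mul_assoc, abs_mul, abs_of_pos (by positivity : (0 : ℝ) < 2 ^ k * a)]
  refine le_mul_of_one_le_left (abs_nonneg _) ?_
  rw [← inv_le_iff_one_le_mul₀ ha]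
  exact hk.le

/-- **Modular convergence for `Δ₂ ∩ ∇₂` Young functions.**
If a finite-valued Young function `A` satisfies the `Δ₂` and `∇₂` conditions, then the
truncated partial Hermite sums converge in the `A`-modular for every `f ∈ L^A(ℝ)`. -/
theorem hermite_orlicz_modular_convergence_delta2_nabla2
    (A : YoungFunction)
    (hAfin : ∀ t : ℝ, 0 ≤ t → A.toFun t < ⊤)
    (hDelta2 : ∃ C : ℝ, 0 < C ∧ ∀ t : ℝ, 0 < t →
      A.toFun (2 * t) ≤ ENNReal.ofReal C * A.toFun t)
    (hNabla2 : ∃ c : ℝ, 0 < c ∧ ∀ t : ℝ, 0 < t →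
      A.toFun t ≤ ENNReal.ofReal (1 / (2 * c)) * A.toFun (c * t))
    (T : ℕ → ℝ) (hTpos : ∀ n, 0 < T n)
    (hTinf : Tendsto T atTop atTop)
    (hTslow : Tendsto (fun n : ℕ => T n / (n : ℝ) ^ ((1 : ℝ) / 34)) atTop (nhds 0))
    (f : ℝ → ℝ) (hmeas : Measurable f)
    (hf : ∃ c' : ℝ, 0 < c' ∧ (∫⁻ x : ℝ, A.toFun (c' * |f x|)) < ⊤) :
    Tendsto (fun n : ℕ =>
        ∫⁻ x : ℝ, A.toFun
          (|Set.indicator (Set.Ioo (-(T n)) (T n))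
              (hermitePartialSum n (Set.indicator (Set.Ioo (-(T n)) (T n)) f)) x - f x|))
      atTop (nhds 0) := by
  obtain ⟨C, -, hC⟩ := hDelta2
  obtain ⟨c, hc, hN⟩ := hNabla2
  obtain ⟨c', hc', hf⟩ := hf
  have h := YoungFunction.isRegularYoung_evenReal hAfin hc hC hN
  have h1 : 0 < A.evenReal 1 := by
    obtain ⟨t, ht, ht0⟩ := A.exists_toFun_ne_zero
    refine h.pos_of_ne_zero (s := t) ?_ one_ne_zero
    rw [YoungFunction.evenReal, abs_of_pos ht]
    exact (ENNReal.toReal_pos ht0 (hAfin t ht.le).ne).ne'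
  have hφ : ∫⁻ x, ENNReal.ofReal (A.evenReal (f x)) ≠ ⊤ := by
    refine h.lintegral_ne_top hc' ?_
    simpa only [YoungFunction.ofReal_evenReal hAfin, abs_mul, abs_of_pos hc'] using hf.ne
  simpa only [YoungFunction.ofReal_evenReal hAfin] using
    h.tendsto_lintegral_hermitePartialSum h1 hTpos hTinf hTslow hmeas hφ
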